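/- arXiv:2302.12300 — 6 statements merged into one kernel-verified Lean document; each statement's English description precedes it below -/
import Mathlib

section
/- Let (X, M) be a measurable space, μ₁ a positive measure on (X, M), μ₂ a positive Borel measure on ℝ, and μ₃ a positive measure on (X, M) such that ψ·μ₁ ≤ μ₃ for some M-measurable density ψ : X → [0,∞) (in particular this holds when ψ is a density of the absolutely continuous part of μ₃ with respect to μ₁). Let N : X → ℝ be M-measurable and let 1 < p ≤ q < ∞, with p' = p/(p−1) and q' = q/(q−1). If B := sup_{r∈ℝ} μ₂([r,+∞))^{1/q} (∫_{{x : N(x)<r}} ψ(x)^{−p'/p} dμ₁(x))^{1/p'} is finite, then for every M-measurable function f : X → [0,+∞], (∫_ℝ (∫_{{x : N(x)<r}} f(x) dμ₁(x))^q dμ₂(r))^{1/q} ≤ min((p')^{1/p'} p^{1/q}, (q')^{1/p'} q^{1/q}) · B · (∫_X f(x)^p dμ₃(x))^{1/p}. -/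
open MeasureTheory ENNReal
open scoped NNReal

lemma hardy_cofinal {X : Type*} [MeasurableSpace X] (m : Measure X) (N : X → ℝ) (A : Set X)
    (C : ℝ≥0∞) (h : ∀ x ∈ A, m {y | N y ≤ N x} ≤ C) : m A ≤ C := by
  rcases A.eq_empty_or_nonempty with rfl | hA
  · simp
  obtain ⟨u, hu, hlim, hmem⟩ := exists_seq_tendsto_sSup (S := (fun x => (N x : EReal)) '' A)
    (hA.image _) (OrderTop.bddAbove _)
  have hS : ∀ x ∈ A, (N x : EReal) ≤ sSup ((fun x => (N x : EReal)) '' A) :=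
    fun x hx => le_sSup ⟨x, hx, rfl⟩
  by_cases hT : sSup ((fun x => (N x : EReal)) '' A) ∈ (fun x => (N x : EReal)) '' A
  · obtain ⟨x, hx, hxe⟩ := hT
    refine le_trans (measure_mono fun y hy => ?_) (h x hx)
    have := hS y hy
    rw [← hxe] at this
    exact EReal.coe_le_coe_iff.1 this
  · have hsub : A ⊆ ⋃ n, {y | (N y : EReal) ≤ u n} := by
      intro y hy
      have hlt : (N y : EReal) < sSup ((fun x => (N x : EReal)) '' A) :=
        lt_of_le_of_ne (hS y hy) (fun he => hT (he ▸ ⟨y, hy, rfl⟩))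
      obtain ⟨n, hn⟩ := (hlim.eventually (lt_mem_nhds hlt)).exists
      exact Set.mem_iUnion.2 ⟨n, hn.le⟩
    refine le_trans (measure_mono hsub) ?_
    rw [Monotone.measure_iUnion]
    · refine iSup_le fun n => ?_
      obtain ⟨x, hx, hxe⟩ := hmem n
      refine le_trans (measure_mono fun y hy => ?_) (h x hx)
      have hy' : (N y : EReal) ≤ u n := hy
      rw [← hxe] at hy'
      exact EReal.coe_le_coe_iff.1 hy'
    · intro i j hij y hy
      exact le_trans hy (hu hij)

lemma hardy_pow {X : Type*} [MeasurableSpace X] (ν : Measure X) [IsFiniteMeasure ν]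
    (U : X → ℝ≥0∞) (hU : Measurable U) (h : ∀ s, ν {x | U x ≤ s} ≤ s) (θ : ℝ) (h0 : 0 < θ)
    (h1 : θ < 1) :
    ∫⁻ x, U x ^ (-θ) ∂ν ≤ ENNReal.ofReal ((1 - θ)⁻¹) * ν Set.univ ^ (1 - θ) := by
  set m := (ν Set.univ).toReal with hm
  have hm0 : 0 ≤ m := ENNReal.toReal_nonneg
  have hmν : ν Set.univ = ENNReal.ofReal m := (ENNReal.ofReal_toReal (measure_ne_top _ _)).symm
  have hU0 : ∀ᵐ x ∂ν, U x ≠ 0 := by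
    have := h 0
    simp only [nonpos_iff_eq_zero] at this
    rw [ae_iff]
    simpa using this
  have e1 : ∫⁻ x, U x ^ (-θ) ∂ν = ∫⁻ x, ENNReal.ofReal ((U x).toReal ^ (-θ)) ∂ν := by
    refine lintegral_congr_ae ?_
    filter_upwards [hU0] with x hx
    by_cases ht : U x = ⊤
    · simp [ht, h0, Real.zero_rpow, h0.ne']
    · rw [← ENNReal.ofReal_rpow_of_pos (ENNReal.toReal_pos hx ht), ENNReal.ofReal_toReal ht]
  have e2 : ∫⁻ s in Set.Ioo 0 m, ENNReal.ofReal (s ^ (-θ)) =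
      ENNReal.ofReal ((1 - θ)⁻¹) * ν Set.univ ^ (1 - θ) := by
    rw [← ofReal_integral_eq_lintegral_ofReal]
    · rw [← integral_Ioc_eq_integral_Ioo, ← intervalIntegral.integral_of_le hm0,
        integral_rpow (Or.inl (by linarith)), Real.zero_rpow (by linarith), hmν,
        ENNReal.ofReal_rpow_of_nonneg hm0 (by linarith), ← ENNReal.ofReal_mul (by
          rw [inv_nonneg]; linarith)]
      congr 1
      rw [show -θ + 1 = 1 - θ by ring]
      field_simp
      ring
    · have := (intervalIntegral.intervalIntegrable_rpow' (a := 0) (b := m) (r := -θ)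
        (by linarith)).1
      exact this.mono_set Set.Ioo_subset_Ioc_self
    · filter_upwards [ae_restrict_mem measurableSet_Ioo] with s hs
      exact Real.rpow_nonneg hs.1.le _
  rw [e1, ← e2, lintegral_eq_lintegral_meas_lt, lintegral_eq_lintegral_meas_lt]
  · refine setLIntegral_mono' measurableSet_Ioi fun t ht => ?_
    have ht : 0 < t := ht
    set c := t ^ (-(1/θ)) with hc
    have hc0 : 0 < c := Real.rpow_pos_of_pos ht _
    have hct : c ^ (-θ) = t := by
      rw [hc, ← Real.rpow_mul ht.le]
      have : -(1/θ) * -θ = 1 := by field_simp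
      rw [this, Real.rpow_one]
    have a1 : ν {a | t < (U a).toReal ^ (-θ)} ≤ ENNReal.ofReal c := by
      refine le_trans (measure_mono fun x hx => ?_) (h _)
      have hx : t < (U x).toReal ^ (-θ) := hx
      have hp : 0 < (U x).toReal := by
        rcases (ENNReal.toReal_nonneg (a := U x)).eq_or_lt with h' | h'
        · rw [← h', Real.zero_rpow (by linarith)] at hx
          linarith
        · exact h'
      show U x ≤ _
      rw [ENNReal.le_ofReal_iff_toReal_le (fun hh => by simp [hh] at hp) hc0.le]
      by_contra hlt
      push Not at hlt
      have := Real.rpow_le_rpow_of_nonpos hc0 hlt.le (by linarith : -θ ≤ 0)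
      linarith
    have a2 : ν {a | t < (U a).toReal ^ (-θ)} ≤ ENNReal.ofReal m := by
      rw [← hmν]; exact measure_mono (Set.subset_univ _)
    calc _ ≤ ENNReal.ofReal (min m c) := by
          rcases min_choice m c with h' | h' <;> rw [h'] <;> assumption
      _ = volume (Set.Ioo 0 (min m c)) := by simp
      _ ≤ _ := by
        rw [Measure.restrict_apply' measurableSet_Ioo]
        refine measure_mono fun s hs => ⟨?_, hs.1, lt_of_lt_of_le hs.2 (min_le_left _ _)⟩
        show t < s ^ (-θ)
        rw [← hct]
        exact Real.rpow_lt_rpow_of_neg hs.1 (lt_of_lt_of_le hs.2 (min_le_right _ _)) (by linarith)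
  · filter_upwards [ae_restrict_mem measurableSet_Ioo] with s hs
    exact Real.rpow_nonneg hs.1.le _
  · fun_prop
  · exact Filter.Eventually.of_forall fun x => Real.rpow_nonneg ENNReal.toReal_nonneg _
  · fun_prop

lemma hardy_meas {X : Type*} [MeasurableSpace X] (ν : Measure X) (N : X → ℝ) (hN : Measurable N) :
    Measurable fun x => ν {y | N y ≤ N x} := by
  have : Monotone fun t : ℝ => ν {y | N y ≤ t} := fun a b hab =>
    measure_mono fun y hy => le_trans hy hab
  exact this.measurable.comp hN

lemma hardy_pow' {X : Type*} [MeasurableSpace X] (ν : Measure X) (N : X → ℝ) (hN : Measurable N)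
    (r θ : ℝ) (h0 : 0 < θ) (h1 : θ < 1) :
    ∫⁻ x in {x | N x < r}, ν {y | N y ≤ N x} ^ (-θ) ∂ν ≤
      ENNReal.ofReal ((1 - θ)⁻¹) * ν {x | N x < r} ^ (1 - θ) := by
  by_cases hf : ν {x | N x < r} = ⊤
  · rw [hf, ENNReal.top_rpow_of_pos (by linarith), ENNReal.mul_top]
    · simp
    · simp [h1]
  have : IsFiniteMeasure (ν.restrict {x | N x < r}) := ⟨by simpa using lt_top_iff_ne_top.2 hf⟩
  have := hardy_pow (ν.restrict {x | N x < r}) _ (hardy_meas ν N hN) (fun s => ?_) θ h0 h1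
  · simpa using this
  · refine le_trans (Measure.restrict_apply_le _ _) ?_
    exact hardy_cofinal _ N _ _ fun x hx => hx

lemma hardy_mink {X Y : Type*} [MeasurableSpace X] [MeasurableSpace Y] (μ : Measure X) [SFinite μ]
    (κ : Measure Y) [IsFiniteMeasure κ] (k : Y → X → ℝ≥0∞) (hk : Measurable (Function.uncurry k))
    (s : ℝ) (hs : 1 ≤ s) :
    (∫⁻ r, (∫⁻ x, k r x ∂μ) ^ s ∂κ) ^ (1 / s) ≤ ∫⁻ x, (∫⁻ r, k r x ^ s ∂κ) ^ (1 / s) ∂μ := by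
  rcases hs.eq_or_lt with rfl | hs
  · simp only [ENNReal.rpow_one, div_one]
    rw [lintegral_lintegral_swap hk.aemeasurable]
  have hs0 : 0 < s := by linarith
  have hconj : s.HolderConjugate (s / (s - 1)) := Real.HolderConjugate.conjExponent hs
  set s' := s / (s - 1) with hs'
  set R := ∫⁻ x, (∫⁻ r, k r x ^ s ∂κ) ^ (1 / s) ∂μ with hR
  have hGm : Measurable fun r => ∫⁻ x, k r x ∂μ := hk.lintegral_prod_right'
  set G := fun r => ∫⁻ x, k r x ∂μ with hG
  have key : ∀ n : ℕ, ∫⁻ r, (min (G r) n) ^ s ∂κ ≤ R ^ s := by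
    intro n
    set A := ∫⁻ r, (min (G r) n) ^ s ∂κ with hA
    have hAfin : A ≠ ⊤ := by
      have : A ≤ ∫⁻ r, (n : ℝ≥0∞) ^ s ∂κ := lintegral_mono fun r =>
        ENNReal.rpow_le_rpow (min_le_right _ _) hs0.le
      refine ne_top_of_le_ne_top ?_ this
      rw [lintegral_const]
      exact ENNReal.mul_ne_top (ENNReal.rpow_ne_top_of_nonneg hs0.le (by simp)) (measure_ne_top _ _)
    have hle : A ≤ R * A ^ (1 / s') := by
      calc A ≤ ∫⁻ r, G r * (min (G r) n) ^ (s - 1) ∂κ := by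
            refine lintegral_mono fun r => ?_
            calc (min (G r) n) ^ s = (min (G r) n) ^ (1 + (s - 1)) := by ring_nf
              _ = min (G r) n * (min (G r) n) ^ (s - 1) := by
                rw [ENNReal.rpow_add_of_nonneg _ _ (by linarith) (by linarith), ENNReal.rpow_one]
              _ ≤ _ := by gcongr; exact min_le_left _ _
        _ = ∫⁻ r, ∫⁻ x, k r x * (min (G r) n) ^ (s - 1) ∂μ ∂κ := by
            refine lintegral_congr fun r => ?_
            exact (lintegral_mul_const (f := fun x => k r x) _ (hk.comp measurable_prodMk_left)).symm
        _ = ∫⁻ x, ∫⁻ r, k r x * (min (G r) n) ^ (s - 1) ∂κ ∂μ := by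
            refine lintegral_lintegral_swap (Measurable.aemeasurable ?_)
            refine hk.mul (Measurable.pow_const ?_ _)
            exact (hGm.comp measurable_fst).min measurable_const
        _ ≤ ∫⁻ x, (∫⁻ r, k r x ^ s ∂κ) ^ (1 / s) * A ^ (1 / s') ∂μ := by
            refine lintegral_mono fun x => ?_
            refine le_trans (ENNReal.lintegral_mul_le_Lp_mul_Lq κ hconj
              (f := fun r => k r x) (g := fun r => (min (G r) n) ^ (s - 1))
              (hk.comp measurable_prodMk_right).aemeasurable
              ((hGm.min measurable_const).pow_const _).aemeasurable) ?_
            have : ∀ r, ((min (G r) n) ^ (s - 1)) ^ s' = (min (G r) n) ^ s := by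
              intro r
              rw [← ENNReal.rpow_mul]
              congr 1
              rw [hs']
              have : s - 1 ≠ 0 := by linarith
              field_simp
            simp only [this]
            exact le_rfl
        _ = R * A ^ (1 / s') := by
            rw [lintegral_mul_const]
            exact (Measurable.lintegral_prod_left' (f := fun z : Y × X => k z.1 z.2 ^ s)
              (hk.pow_const _)).pow_const _
    by_cases hA0 : A = 0
    · rw [hA0]; exact zero_le
    have hsplit : A = A ^ (1 / s) * A ^ (1 / s') := by
      rw [← ENNReal.rpow_add _ _ hA0 hAfin]
      have := hconj.inv_add_inv_eq_one
      rw [one_div, one_div, this, ENNReal.rpow_one]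
    have hne : A ^ (1 / s') ≠ 0 := by
      simp [ENNReal.rpow_eq_zero_iff, hA0, hAfin]
    have hnt : A ^ (1 / s') ≠ ⊤ := by
      simp [ENNReal.rpow_eq_top_iff, hA0, hAfin]
    have h2 : A ^ (1 / s) ≤ R := by
      rw [← ENNReal.mul_le_mul_iff_left hne hnt, ← hsplit]
      exact hle
    rwa [one_div, ENNReal.rpow_inv_le_iff hs0] at h2
  rw [one_div, ENNReal.rpow_inv_le_iff hs0]
  have hsup : ∀ r, G r ^ s = ⨆ n : ℕ, (min (G r) n) ^ s := by
    intro r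
    refine le_antisymm ?_ (iSup_le fun n => ENNReal.rpow_le_rpow (min_le_left _ _) hs0.le)
    have ht : Filter.Tendsto (fun n : ℕ => (min (G r) (n : ℝ≥0∞)) ^ s) Filter.atTop
        (nhds ((min (G r) ⊤) ^ s)) :=
      (ENNReal.continuous_rpow_const.tendsto _).comp
        (tendsto_const_nhds.min ENNReal.tendsto_nat_nhds_top)
    rw [min_eq_left le_top] at ht
    exact le_of_tendsto' ht fun n => le_iSup (fun n : ℕ => (min (G r) (n : ℝ≥0∞)) ^ s) n
  have : ∫⁻ r, G r ^ s ∂κ = ⨆ n : ℕ, ∫⁻ r, (min (G r) n) ^ s ∂κ := by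
    simp_rw [hsup]
    refine lintegral_iSup (fun n => (hGm.min measurable_const).pow_const _) ?_
    intro i j hij r
    refine ENNReal.rpow_le_rpow (min_le_min_left _ ?_) hs0.le
    exact_mod_cast hij
  show ∫⁻ r, G r ^ s ∂κ ≤ R ^ s
  rw [this]
  exact iSup_le key

lemma hardy_fin {X : Type*} [MeasurableSpace X] (μ₁ : Measure X) (μ₂ : Measure ℝ)
    [IsFiniteMeasure μ₂] (ψ : X → ℝ≥0) (hψ : Measurable ψ) (N : X → ℝ) (hN : Measurable N)
    (p q p' : ℝ) (hpp : p.HolderConjugate p') (hpq : p ≤ q) (θ : ℝ) (h0 : 0 < θ) (h1 : θ < 1)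
    (B : ℝ≥0∞)
    (hB : ∀ r : ℝ, μ₂ (Set.Ici r) ^ (1 / q) *
      (∫⁻ x in {x | N x < r}, ((ψ x : ℝ≥0∞)) ^ (-(p' / p)) ∂μ₁) ^ (1 / p') ≤ B)
    (hfin : ∫⁻ x, ((ψ x : ℝ≥0∞)) ^ (-(p' / p)) ∂μ₁ ≠ ⊤)
    (f : X → ℝ≥0∞) (hf : Measurable f) :
    (∫⁻ r, (∫⁻ x in {x | N x < r}, f x ∂μ₁) ^ q ∂μ₂) ^ (1 / q) ≤
      ENNReal.ofReal ((1 - θ)⁻¹) ^ (1 / p') * ENNReal.ofReal (θ⁻¹) ^ (1 / q) * B *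
        (∫⁻ x, f x ^ p * ψ x ∂μ₁) ^ (1 / p) := by
  have hp0 : 0 < p := hpp.pos
  have hp'0 : 0 < p' := hpp.symm.pos
  have hq0 : 0 < q := by linarith
  set a := ENNReal.ofReal ((1 - θ)⁻¹) with ha
  set b := ENNReal.ofReal (θ⁻¹) with hb
  set v : X → ℝ≥0∞ := fun x => (ψ x : ℝ≥0∞) ^ (-(p' / p)) with hv
  have hvm : Measurable v := by fun_prop
  have hv0 : ∀ x, v x ≠ 0 := by
    intro x
    have : 0 < p' / p := by positivity
    simp [hv, ENNReal.rpow_eq_zero_iff, this, this.le]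
  set ν := μ₁.withDensity v with hν
  have hνfin : IsFiniteMeasure ν := isFiniteMeasure_withDensity hfin
  have hac : μ₁ ≪ ν := withDensity_absolutelyContinuous' hvm.aemeasurable
    (Filter.Eventually.of_forall hv0)
  have hsf : SFinite μ₁ := sFinite_of_absolutelyContinuous hac
  have hms : ∀ r, MeasurableSet {x | N x < r} := fun r => measurableSet_lt hN measurable_const
  set V : ℝ → ℝ≥0∞ := fun r => ν {x | N x < r} with hV
  have hVm : Measurable V := by
    have : Monotone V := fun a b hab => measure_mono fun y hy => lt_of_lt_of_le hy hab
    exact this.measurable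
  have hBV : ∀ r, μ₂ (Set.Ici r) ^ (1 / q) * V r ^ (1 / p') ≤ B := by
    intro r
    have := hB r
    rwa [← withDensity_apply v (hms r)] at this
  set U : X → ℝ≥0∞ := fun x => ν {y | N y ≤ N x} with hUdef
  have hUm : Measurable U := hardy_meas ν N hN
  have hUt : ∀ x, U x ≠ ⊤ := fun x => measure_ne_top _ _
  have hU0 : ∀ᵐ x ∂μ₁, U x ≠ 0 := by
    refine hac.ae_le ?_
    change ∀ᵐ x ∂ν, U x ≠ 0
    rw [ae_iff]
    have := hardy_cofinal ν N {x | U x ≤ 0} 0 fun x hx => hx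
    simpa using this
  have hψ0 : ∀ᵐ x ∂μ₁, ψ x ≠ 0 := by
    filter_upwards [ae_lt_top hvm hfin] with x hx h
    have : 0 < p' / p := by positivity
    simp [hv, h, this] at hx
  set g : X → ℝ≥0∞ := fun x => f x ^ p * ψ x * U x ^ (θ * p / p') with hg
  have hgm : Measurable g := by fun_prop
  -- Hoelder
  have hH : ∀ r, ∫⁻ x in {x | N x < r}, f x ∂μ₁ ≤
      (∫⁻ x in {x | N x < r}, g x ∂μ₁) ^ (1 / p) * (a * V r ^ (1 - θ)) ^ (1 / p') := by
    intro r
    calc ∫⁻ x in {x | N x < r}, f x ∂μ₁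
        = ∫⁻ x in {x | N x < r}, ((fun x => f x * (ψ x : ℝ≥0∞) ^ (1 / p) * U x ^ (θ / p')) *
            (fun x => U x ^ (-(θ / p')) * (ψ x : ℝ≥0∞) ^ (-(1 / p)))) x ∂μ₁ := by
          refine lintegral_congr_ae (ae_restrict_of_ae ?_)
          filter_upwards [hU0, hψ0] with x hx hx'
          have hx'' : (ψ x : ℝ≥0∞) ≠ 0 := by simpa using hx'
          have e1 : U x ^ (θ / p') * U x ^ (-(θ / p')) = 1 := by
            rw [← ENNReal.rpow_add _ _ hx (hUt x)]; simp
          have e2 : (ψ x : ℝ≥0∞) ^ (1 / p) * (ψ x : ℝ≥0∞) ^ (-(1 / p)) = 1 := by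
            rw [← ENNReal.rpow_add _ _ hx'' (by simp)]; simp
          calc f x = f x * ((ψ x : ℝ≥0∞) ^ (1 / p) * (ψ x : ℝ≥0∞) ^ (-(1 / p))) *
                (U x ^ (θ / p') * U x ^ (-(θ / p'))) := by rw [e1, e2]; simp
            _ = _ := by simp only [Pi.mul_apply]; ring
      _ ≤ _ := ENNReal.lintegral_mul_le_Lp_mul_Lq _ hpp (by fun_prop) (by fun_prop)
      _ ≤ _ := by
        have c1 : ∀ x, (f x * (ψ x : ℝ≥0∞) ^ (1 / p) * U x ^ (θ / p')) ^ p = g x := by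
          intro x
          rw [ENNReal.mul_rpow_of_nonneg _ _ hp0.le, ENNReal.mul_rpow_of_nonneg _ _ hp0.le,
            ← ENNReal.rpow_mul, ← ENNReal.rpow_mul, one_div_mul_cancel hp0.ne', ENNReal.rpow_one,
            div_mul_eq_mul_div]
        have c2 : ∀ x, (U x ^ (-(θ / p')) * (ψ x : ℝ≥0∞) ^ (-(1 / p))) ^ p' = v x * U x ^ (-θ) := by
          intro x
          rw [ENNReal.mul_rpow_of_nonneg _ _ hp'0.le, ← ENNReal.rpow_mul, ← ENNReal.rpow_mul,
            mul_comm]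
          congr 2
          · field_simp
          · field_simp
        simp only [c1, c2]
        gcongr
        refine le_trans (le_of_eq ?_) (hardy_pow' ν N hN r θ h0 h1)
        rw [hν, setLIntegral_withDensity_eq_setLIntegral_mul _ hvm (hUm.pow_const _) (hms r)]
        rfl
  set k : ℝ → X → ℝ≥0∞ := fun r x =>
    if N x < r then g x * V r ^ ((1 - θ) * p / p') else 0 with hk
  have hkm : Measurable (Function.uncurry k) := by
    refine Measurable.ite (measurableSet_lt (hN.comp measurable_snd) measurable_fst) ?_
      measurable_const
    exact (hgm.comp measurable_snd).mul ((hVm.comp measurable_fst).pow_const _)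
  have hkint : ∀ r, ∫⁻ x, k r x ∂μ₁ = (∫⁻ x in {x | N x < r}, g x ∂μ₁) *
      V r ^ ((1 - θ) * p / p') := by
    intro r
    rw [← lintegral_mul_const _ hgm, ← lintegral_indicator (hms r)]
    rfl
  have hF : ∀ r, (∫⁻ x in {x | N x < r}, f x ∂μ₁) ^ q ≤
      (a ^ (1 / p')) ^ q * (∫⁻ x, k r x ∂μ₁) ^ (q / p) := by
    intro r
    rw [show q / p = (1 / p) * q by ring, ENNReal.rpow_mul _ (1 / p) q,
      ← ENNReal.mul_rpow_of_nonneg _ _ hq0.le]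
    refine ENNReal.rpow_le_rpow ((hH r).trans (le_of_eq ?_)) hq0.le
    rw [hkint, ENNReal.mul_rpow_of_nonneg _ _ (by positivity : 0 ≤ 1 / p'),
      ENNReal.mul_rpow_of_nonneg _ _ (by positivity : 0 ≤ 1 / p), ← ENNReal.rpow_mul,
      ← ENNReal.rpow_mul, show (1 - θ) * p / p' * (1 / p) = (1 - θ) * (1 / p') by field_simp]
    ring
  have haf : a ^ (1 / p') ≠ ⊤ := ENNReal.rpow_ne_top_of_nonneg (by positivity) (by simp [ha])
  have hUW : ∀ x, U x ^ (1 / p') * μ₂ (Set.Ioi (N x)) ^ (1 / q) ≤ B := by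
    intro x
    by_cases hx : U x = 0
    · rw [hx, ENNReal.zero_rpow_of_pos (by positivity)]; simp
    have n0 : U x ^ (1 / p') ≠ 0 := by simp [ENNReal.rpow_eq_zero_iff, hx, hUt x]
    have nt : U x ^ (1 / p') ≠ ⊤ := by simp [ENNReal.rpow_eq_top_iff, hx, hUt x]
    have : μ₂ (Set.Ioi (N x)) ≤ (B / U x ^ (1 / p')) ^ q := by
      refine hardy_cofinal μ₂ (fun r => -r) _ _ fun r hr => ?_
      have hr : N x < r := hr
      have hset : {y : ℝ | -y ≤ -r} = Set.Ici r := by ext; simp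
      rw [hset, ← ENNReal.rpow_inv_le_iff hq0, ENNReal.le_div_iff_mul_le (Or.inl n0) (Or.inl nt),
        ← one_div]
      refine le_trans ?_ (hBV r)
      gcongr
      exact measure_mono fun y hy => lt_of_le_of_lt hy hr
    rw [← ENNReal.rpow_inv_le_iff hq0, ENNReal.le_div_iff_mul_le (Or.inl n0) (Or.inl nt),
        ← one_div] at this
    rwa [mul_comm]
  have hWm : Measurable fun r => μ₂ (Set.Ici r) := by
    have : Antitone fun r => μ₂ (Set.Ici r) := fun a b hab =>
      measure_mono (Set.Ici_subset_Ici.2 hab)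
    exact this.measurable
  have hW0 : ∀ᵐ r ∂μ₂, μ₂ (Set.Ici r) ≠ 0 := by
    rw [ae_iff]
    have := hardy_cofinal μ₂ (fun r => -r) {r | μ₂ (Set.Ici r) = 0} 0 fun r hr => by
      have hset : {y : ℝ | -y ≤ -r} = Set.Ici r := by ext; simp
      rw [hset]; exact le_of_eq hr
    simpa using this
  have hVW : ∀ t : ℝ, ∫⁻ r in Set.Ioi t, V r ^ ((1 - θ) * q / p') ∂μ₂ ≤
      B ^ ((1 - θ) * q) * (b * μ₂ (Set.Ioi t) ^ θ) := by
    intro t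
    have h1θ : 0 < 1 - θ := by linarith
    have hp1 := hardy_pow' μ₂ (fun r => -r) measurable_neg (-t) (1 - θ) h1θ (by linarith)
    have hset : ∀ r, {y : ℝ | -y ≤ -r} = Set.Ici r := by intro r; ext; simp
    have hset' : {y : ℝ | -y < -t} = Set.Ioi t := by ext; simp
    simp only [hset, hset', _root_.sub_sub_cancel] at hp1
    refine le_trans ?_ (mul_le_mul_right hp1 _)
    rw [← lintegral_const_mul _ (hWm.pow_const _)]
    refine lintegral_mono_ae (ae_restrict_of_ae ?_)
    filter_upwards [hW0] with r hr
    have ht : μ₂ (Set.Ici r) ≠ ⊤ := measure_ne_top _ _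
    have n0 : μ₂ (Set.Ici r) ^ (1 - θ) ≠ 0 := by simp [ENNReal.rpow_eq_zero_iff, hr, ht]
    have nt : μ₂ (Set.Ici r) ^ (1 - θ) ≠ ⊤ := by simp [ENNReal.rpow_eq_top_iff, hr, ht]
    rw [ENNReal.rpow_neg, ← div_eq_mul_inv, ENNReal.le_div_iff_mul_le (Or.inl n0) (Or.inl nt)]
    refine le_trans (le_of_eq ?_) (ENNReal.rpow_le_rpow (hBV r)
      (by positivity : 0 ≤ (1 - θ) * q))
    rw [ENNReal.mul_rpow_of_nonneg _ _ (by positivity : 0 ≤ (1 - θ) * q), ← ENNReal.rpow_mul,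
      ← ENNReal.rpow_mul, mul_comm]
    congr 2 <;> field_simp
  have hpt : ∀ x, (∫⁻ r, k r x ^ (q / p) ∂μ₂) ^ (1 / (q / p)) ≤
      f x ^ p * ψ x * (B ^ p * b ^ (p / q)) := by
    intro x
    have h1θ : 0 < 1 - θ := by linarith
    have i1 : ∫⁻ r, k r x ^ (q / p) ∂μ₂ =
        g x ^ (q / p) * ∫⁻ r in Set.Ioi (N x), V r ^ ((1 - θ) * q / p') ∂μ₂ := by
      rw [← lintegral_const_mul _ (hVm.pow_const _), ← lintegral_indicator measurableSet_Ioi]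
      refine lintegral_congr fun r => ?_
      have hqp : 0 < q / p := by positivity
      by_cases hr : N x < r
      · simp only [hk, hr, if_true, Set.mem_Ioi, Set.indicator_of_mem]
        rw [ENNReal.mul_rpow_of_nonneg _ _ hqp.le, ← ENNReal.rpow_mul]
        congr 2
        field_simp
      · simp [hk, hr, hqp]
    rw [i1]
    have hpq' : 0 ≤ 1 / (q / p) := by positivity
    refine le_trans (ENNReal.rpow_le_rpow (mul_le_mul_right (hVW (N x)) _) hpq') ?_
    rw [ENNReal.mul_rpow_of_nonneg _ _ hpq', ENNReal.mul_rpow_of_nonneg _ _ hpq',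
      ENNReal.mul_rpow_of_nonneg _ _ hpq', ← ENNReal.rpow_mul, ← ENNReal.rpow_mul,
      ← ENNReal.rpow_mul, mul_one_div_cancel (by positivity : q / p ≠ 0), ENNReal.rpow_one]
    have hh := ENNReal.rpow_le_rpow (hUW x) (by positivity : 0 ≤ θ * p)
    rw [ENNReal.mul_rpow_of_nonneg _ _ (by positivity : 0 ≤ θ * p), ← ENNReal.rpow_mul,
      ← ENNReal.rpow_mul] at hh
    rw [show (1 : ℝ) / (q / p) = p / q by field_simp,
      show (1 - θ) * q * (p / q) = (1 - θ) * p by field_simp,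
      show B ^ p = B ^ ((1 - θ) * p) * B ^ (θ * p) by
        rw [← ENNReal.rpow_add_of_nonneg _ _ (by positivity) (by positivity)]; ring_nf]
    rw [show 1 / p' * (θ * p) = θ * p / p' by ring, show 1 / q * (θ * p) = θ * (p / q) by ring] at hh
    calc _ = f x ^ p * ψ x * (B ^ ((1 - θ) * p) *
          (U x ^ (θ * p / p') * μ₂ (Set.Ioi (N x)) ^ (θ * (p / q))) * b ^ (p / q)) := by
          simp only [hg]; ring
      _ ≤ _ := by gcongr
  have hm := hardy_mink μ₁ μ₂ k hkm (q / p) (by rw [le_div_iff₀ hp0]; linarith)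
  have hm2 := hm.trans (lintegral_mono hpt)
  rw [lintegral_mul_const _ (by fun_prop)] at hm2
  have hm3 := ENNReal.rpow_le_rpow hm2 (by positivity : 0 ≤ 1 / p)
  rw [← ENNReal.rpow_mul, show 1 / (q / p) * (1 / p) = 1 / q by field_simp,
    ENNReal.mul_rpow_of_nonneg _ _ (by positivity : 0 ≤ 1 / p),
    ENNReal.mul_rpow_of_nonneg _ _ (by positivity : 0 ≤ 1 / p), ← ENNReal.rpow_mul,
    ← ENNReal.rpow_mul, mul_one_div_cancel hp0.ne', ENNReal.rpow_one,
    show p / q * (1 / p) = 1 / q by field_simp] at hm3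
  calc _ ≤ (∫⁻ r, (a ^ (1 / p')) ^ q * (∫⁻ x, k r x ∂μ₁) ^ (q / p) ∂μ₂) ^ (1 / q) :=
        ENNReal.rpow_le_rpow (lintegral_mono hF) (by positivity)
    _ = a ^ (1 / p') * (∫⁻ r, (∫⁻ x, k r x ∂μ₁) ^ (q / p) ∂μ₂) ^ (1 / q) := by
        rw [lintegral_const_mul' _ _ (ENNReal.rpow_ne_top_of_nonneg hq0.le haf),
          ENNReal.mul_rpow_of_nonneg _ _ (by positivity : 0 ≤ 1 / q),
          ← ENNReal.rpow_mul _ q, mul_one_div_cancel hq0.ne', ENNReal.rpow_one]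
    _ ≤ _ := mul_le_mul_right hm3 _
    _ = _ := by ring

lemma hardy_gen {X : Type*} [MeasurableSpace X] (μ₁ : Measure X) (μ₂ : Measure ℝ)
    (ψ : X → ℝ≥0) (hψ : Measurable ψ) (N : X → ℝ) (hN : Measurable N)
    (p q p' : ℝ) (hpp : p.HolderConjugate p') (hpq : p ≤ q) (θ : ℝ) (h0 : 0 < θ) (h1 : θ < 1)
    (B : ℝ≥0∞) (hBfin : B ≠ ⊤)
    (hB : ∀ r : ℝ, μ₂ (Set.Ici r) ^ (1 / q) *
      (∫⁻ x in {x | N x < r}, ((ψ x : ℝ≥0∞)) ^ (-(p' / p)) ∂μ₁) ^ (1 / p') ≤ B)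
    (f : X → ℝ≥0∞) (hf : Measurable f) :
    (∫⁻ r, (∫⁻ x in {x | N x < r}, f x ∂μ₁) ^ q ∂μ₂) ^ (1 / q) ≤
      ENNReal.ofReal ((1 - θ)⁻¹) ^ (1 / p') * ENNReal.ofReal (θ⁻¹) ^ (1 / q) * B *
        (∫⁻ x, f x ^ p * ψ x ∂μ₁) ^ (1 / p) := by
  have hp0 : 0 < p := hpp.pos
  have hp'0 : 0 < p' := hpp.symm.pos
  have hq0 : 0 < q := by linarith
  have hms : ∀ r, MeasurableSet {x | N x < r} := fun r => measurableSet_lt hN measurable_const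
  set C := ENNReal.ofReal ((1 - θ)⁻¹) ^ (1 / p') * ENNReal.ofReal (θ⁻¹) ^ (1 / q) * B *
        (∫⁻ x, f x ^ p * ψ x ∂μ₁) ^ (1 / p) with hC
  set V : ℝ → ℝ≥0∞ := fun r => ∫⁻ x in {x | N x < r}, ((ψ x : ℝ≥0∞)) ^ (-(p' / p)) ∂μ₁ with hV
  set F : ℝ → ℝ≥0∞ := fun r => ∫⁻ x in {x | N x < r}, f x ∂μ₁ with hF
  have hFm : Measurable F := by
    have : Monotone F := fun a b hab =>
      lintegral_mono_set fun y hy => lt_of_lt_of_le hy hab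
    exact this.measurable
  have hVm : Measurable V := by
    have : Monotone V := fun a b hab =>
      lintegral_mono_set fun y hy => lt_of_lt_of_le hy hab
    exact this.measurable
  have hWm : Measurable fun r => μ₂ (Set.Ici r) := by
    have : Antitone fun r => μ₂ (Set.Ici r) := fun a b hab =>
      measure_mono (Set.Ici_subset_Ici.2 hab)
    exact this.measurable
  have hset : ∀ r, {y : ℝ | -y ≤ -r} = Set.Ici r := by intro r; ext; simp
  have hW0 : ∀ᵐ r ∂μ₂, μ₂ (Set.Ici r) ≠ 0 := by
    rw [ae_iff]
    have := hardy_cofinal μ₂ (fun r => -r) {r | μ₂ (Set.Ici r) = 0} 0 fun r hr => by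
      rw [hset]; exact le_of_eq hr
    simpa using this
  have hVF : ∀ r, V r = 0 → F r = 0 := by
    intro r hr
    rw [hV, lintegral_eq_zero_iff (by fun_prop)] at hr
    have : μ₁.restrict {x | N x < r} = 0 := by
      rw [← ae_eq_bot, ← Filter.eventually_false_iff_eq_bot]
      filter_upwards [hr] with x hx
      have : 0 < p' / p := by positivity
      simp [ENNReal.rpow_eq_zero_iff] at hx
      linarith [hx.2]
    simp only [hF, this, lintegral_zero_measure]
  -- bounded pieces
  have hpiece : ∀ a b : ℝ, V a ≠ 0 → μ₂ (Set.Ici b) ≠ 0 →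
      ∫⁻ r in Set.Icc a b, F r ^ q ∂μ₂ ≤ C ^ q := by
    intro a b ha hb
    have hWa : μ₂ (Set.Ici a) ≠ ⊤ := by
      intro h
      refine hBfin (top_le_iff.1 (le_trans (le_of_eq ?_) (hB a)))
      rw [h, ENNReal.top_rpow_of_pos (by positivity), ENNReal.top_mul]
      intro h'
      rw [ENNReal.rpow_eq_zero_iff_of_pos (by positivity)] at h'
      exact ha h'
    have hVb : V b ≠ ⊤ := by
      intro h
      refine hBfin (top_le_iff.1 (le_trans (le_of_eq ?_) (hB b)))
      change _ = _ * (V b) ^ _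
      rw [h, ENNReal.top_rpow_of_pos (by positivity), ENNReal.mul_top]
      intro h'
      rw [ENNReal.rpow_eq_zero_iff_of_pos (by positivity)] at h'
      exact hb h'
    have hfm : IsFiniteMeasure (μ₂.restrict (Set.Icc a b)) := ⟨by
      rw [Measure.restrict_apply_univ]
      exact lt_of_le_of_lt (measure_mono Set.Icc_subset_Ici_self) (lt_top_iff_ne_top.2 hWa)⟩
    have := hardy_fin (μ₁.restrict {x | N x < b}) (μ₂.restrict (Set.Icc a b)) ψ hψ N hN p q p'
      hpp hpq θ h0 h1 B (fun r => ?_) hVb f hf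
    · rw [one_div, ENNReal.rpow_inv_le_iff hq0] at this
      refine le_trans (le_of_eq ?_) (this.trans ?_)
      · refine setLIntegral_congr_fun measurableSet_Icc fun r hr => ?_
        simp only [hF]
        rw [Measure.restrict_restrict (hms r), Set.inter_eq_left.2]
        exact fun x hx => lt_of_lt_of_le hx hr.2
      · refine ENNReal.rpow_le_rpow ?_ hq0.le
        rw [hC, one_div q]
        refine mul_le_mul_right (ENNReal.rpow_le_rpow ?_ (by positivity)) _
        exact lintegral_mono' Measure.restrict_le_self le_rfl
    · refine le_trans ?_ (hB r)
      gcongr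
      · exact Measure.restrict_le_self
      · exact Measure.restrict_le_self
  set m := μ₂.withDensity fun r => F r ^ q with hm
  have hAm : MeasurableSet {r : ℝ | μ₂ (Set.Ici r) ≠ 0} :=
    (hWm (measurableSet_singleton 0)).compl
  have hDm : MeasurableSet {r : ℝ | V r ≠ 0} := (hVm (measurableSet_singleton 0)).compl
  have s1 : ∀ a, V a ≠ 0 → m ({r : ℝ | μ₂ (Set.Ici r) ≠ 0} ∩ Set.Ici a) ≤ C ^ q := by
    intro a ha
    rw [← Measure.restrict_apply hAm]
    refine hardy_cofinal _ (fun r => r) _ _ fun b hb => ?_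
    rw [Measure.restrict_apply' measurableSet_Ici]
    have : {y : ℝ | y ≤ b} ∩ Set.Ici a = Set.Icc a b := by ext; simp [and_comm]
    rw [this, hm, withDensity_apply _ measurableSet_Icc]
    exact hpiece a b ha hb
  have s2 : m ({r : ℝ | V r ≠ 0} ∩ {r : ℝ | μ₂ (Set.Ici r) ≠ 0}) ≤ C ^ q := by
    rw [← Measure.restrict_apply hDm]
    refine hardy_cofinal _ (fun r => -r) _ _ fun a ha => ?_
    rw [Measure.restrict_apply' hAm, hset, Set.inter_comm]
    exact s1 a ha
  rw [one_div, ENNReal.rpow_inv_le_iff hq0]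
  refine le_trans (le_of_eq ?_) s2
  rw [hm, withDensity_apply _ (hDm.inter hAm), ← lintegral_indicator (hDm.inter hAm)]
  refine lintegral_congr_ae ?_
  filter_upwards [hW0] with r hr
  change F r ^ q = _
  by_cases hr' : V r = 0
  · simp [hr', hVF r hr', hq0, Set.indicator]
  · simp [hr', hr, Set.indicator]


/-- General Hardy inequality (Theorem 1, sufficiency, with strict sublevel sets). -/
theorem general_hardy_inequality_lt
    {X : Type*} [MeasurableSpace X]
    (μ₁ μ₃ : Measure X) (μ₂ : Measure ℝ)
    (ψ : X → ℝ≥0) (hψ : Measurable ψ)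
    (hψμ : μ₁.withDensity (fun x => (ψ x : ℝ≥0∞)) ≤ μ₃)
    (N : X → ℝ) (hN : Measurable N)
    (p q p' q' : ℝ) (hp : 1 < p) (hpq : p ≤ q)
    (hp' : p' = p / (p - 1)) (hq' : q' = q / (q - 1))
    (B : ℝ≥0∞)
    (hB : B = ⨆ r : ℝ, μ₂ (Set.Ici r) ^ (1 / q) *
      (∫⁻ x in {x | N x < r}, ((ψ x : ℝ≥0∞)) ^ (-(p' / p)) ∂μ₁) ^ (1 / p'))
    (hBfin : B ≠ ⊤) :
    ∀ f : X → ℝ≥0∞, Measurable f →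
      (∫⁻ r, (∫⁻ x in {x | N x < r}, f x ∂μ₁) ^ q ∂μ₂) ^ (1 / q) ≤
        ENNReal.ofReal (min (p' ^ (1 / p') * p ^ (1 / q)) (q' ^ (1 / p') * q ^ (1 / q))) *
          B * (∫⁻ x, f x ^ p ∂μ₃) ^ (1 / p) := by

  intro f hf
  have hpp : p.HolderConjugate p' := by rw [hp']; exact Real.HolderConjugate.conjExponent hp
  have hp0 : 0 < p := by linarith
  have hq0 : 0 < q := by linarith
  have hp'0 : 0 < p' := hpp.symm.pos
  have hint : ∫⁻ x, f x ^ p * ψ x ∂μ₁ ≤ ∫⁻ x, f x ^ p ∂μ₃ := by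
    refine le_trans (le_of_eq ?_) (lintegral_mono' hψμ le_rfl)
    rw [lintegral_withDensity_eq_lintegral_mul _ (by fun_prop) (by fun_prop)]
    refine lintegral_congr fun x => ?_
    simp [mul_comm]
  have main : ∀ t t' : ℝ, 1 < t → t' = t / (t - 1) →
      (∫⁻ r, (∫⁻ x in {x | N x < r}, f x ∂μ₁) ^ q ∂μ₂) ^ (1 / q) ≤
        ENNReal.ofReal (t' ^ (1 / p') * t ^ (1 / q)) *
          B * (∫⁻ x, f x ^ p ∂μ₃) ^ (1 / p) := by
    intro t t' ht ht'
    have ht0 : 0 < t := by linarith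
    have ht1 : 0 < t - 1 := by linarith
    have ht'0 : 0 < t' := by rw [ht']; positivity
    have := hardy_gen μ₁ μ₂ ψ hψ N hN p q p' hpp hpq t⁻¹ (by positivity)
      (inv_lt_one_of_one_lt₀ ht) B hBfin
      (fun r => hB ▸ le_iSup (fun r : ℝ => μ₂ (Set.Ici r) ^ (1 / q) *
      (∫⁻ x in {x | N x < r}, ((ψ x : ℝ≥0∞)) ^ (-(p' / p)) ∂μ₁) ^ (1 / p')) r) f hf
    refine this.trans ?_
    have e : (1 - t⁻¹)⁻¹ = t' := by rw [ht']; field_simp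
    rw [e, inv_inv, ENNReal.ofReal_mul (by positivity),
      ← ENNReal.ofReal_rpow_of_pos ht'0, ← ENNReal.ofReal_rpow_of_pos ht0]
    gcongr
  rcases min_choice (p' ^ (1 / p') * p ^ (1 / q)) (q' ^ (1 / p') * q ^ (1 / q)) with h | h <;>
    rw [h]
  · exact main p p' hp hp'
  · exact main q q' (by linarith) hq'
end

section
/- Let (X, M) be a measurable space, μ₁ a semi-finite positive measure on (X, M) (i.e., every M-measurable set E with μ₁(E) = +∞ contains an M-measurable subset F with 0 < μ₁(F) < +∞), μ₂ a positive Borel measure on ℝ, and μ₃ a positive measure on (X, M) whose absolutely continuous part with respect to μ₁ has a density ψ : X → [0,∞) with respect to μ₁. Let N : X → ℝ be M-measurable and let 1 < p ≤ q < ∞, with p' = p/(p−1). If C ≥ 0 is a constant such that (∫_ℝ (∫_{{x : N(x)<r}} f(x) dμ₁(x))^q dμ₂(r))^{1/q} ≤ C (∫_X f(x)^p dμ₃(x))^{1/p} for every M-measurable function f : X → [0,+∞], then sup_{r∈ℝ} μ₂([r,+∞))^{1/q} (∫_{{x : N(x)<r}} ψ(x)^{−p'/p} dμ₁(x))^{1/p'}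 ≤ C. -/
open MeasureTheory ENNReal
open scoped NNReal

lemma semifinite_lintegral_le {X : Type*} [MeasurableSpace X] (μ : Measure X)
    (hsf : ∀ E : Set X, MeasurableSet E → μ E = ⊤ →
      ∃ F, F ⊆ E ∧ MeasurableSet F ∧ 0 < μ F ∧ μ F < ⊤)
    (w : X → ℝ≥0∞) (hw : Measurable w) (K : ℝ≥0∞)
    (hK : ∀ g : X → ℝ≥0∞, Measurable g → g ≤ w → ∫⁻ x, g x ∂μ < ⊤ → ∫⁻ x, g x ∂μ ≤ K) :
    ∫⁻ x, w x ∂μ ≤ K := by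
  rcases eq_or_ne K ⊤ with rfl | hKt
  · exact le_top
  let T : Set ℝ≥0∞ := {t | ∃ g : X → ℝ≥0∞, Measurable g ∧ g ≤ w ∧ ∫⁻ x, g x ∂μ < ⊤ ∧
    ∫⁻ x, g x ∂μ = t}
  have hTne : T.Nonempty := ⟨0, 0, measurable_zero, fun x => zero_le, by simp, by simp⟩
  have hTK : sSup T ≤ K := by
    apply sSup_le
    rintro t ⟨g, h1, h2, h3, rfl⟩
    exact hK g h1 h2 h3
  obtain ⟨u, -, hu, huT⟩ := exists_seq_tendsto_sSup hTne (OrderTop.bddAbove T)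
  choose g hgm hgw hgf hgu using huT
  let G : ℕ → X → ℝ≥0∞ := fun n => partialSups g n
  have hG : ∀ n, Measurable (G n) ∧ G n ≤ w ∧ ∫⁻ x, G n x ∂μ < ⊤ := by
    intro n
    induction n with
    | zero => simpa [G] using ⟨hgm 0, hgw 0, hgf 0⟩
    | succ n ih =>
      have e : G (n+1) = G n ⊔ g (n+1) := partialSups_add_one g n
      rw [e]
      refine ⟨ih.1.sup (hgm _), sup_le ih.2.1 (hgw _), ?_⟩
      calc ∫⁻ x, (G n ⊔ g (n+1)) x ∂μ ≤ ∫⁻ x, G n x + g (n+1) x ∂μ := by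
            apply lintegral_mono
            intro x
            exact sup_le le_self_add le_add_self
        _ = ∫⁻ x, G n x ∂μ + ∫⁻ x, g (n+1) x ∂μ := lintegral_add_left ih.1 _
        _ < ⊤ := ENNReal.add_lt_top.2 ⟨ih.2.2, hgf _⟩
  have hmono : Monotone G := (partialSups g).monotone
  let h : X → ℝ≥0∞ := fun x => ⨆ n, G n x
  have hhm : Measurable h := Measurable.iSup fun n => (hG n).1
  have hhw : h ≤ w := fun x => iSup_le fun n => (hG n).2.1 x
  have hhi : ∫⁻ x, h x ∂μ = ⨆ n, ∫⁻ x, G n x ∂μ := lintegral_iSup (fun n => (hG n).1) hmono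
  have hle : ∫⁻ x, h x ∂μ ≤ K := by
    rw [hhi]
    exact iSup_le fun n => hK _ (hG n).1 (hG n).2.1 (hG n).2.2
  have hge : sSup T ≤ ∫⁻ x, h x ∂μ := by
    refine le_of_tendsto' hu fun n => ?_
    rw [← hgu n]
    apply lintegral_mono
    intro x
    exact le_trans (le_partialSups g n x) (le_iSup (fun n => G n x) n)
  have hlt : ∫⁻ x, h x ∂μ < ⊤ := hle.trans_lt hKt.lt_top
  refine le_trans (lintegral_mono_ae ?_) hle
  by_contra hcon
  have hpos : μ {x | h x < w x} ≠ 0 := by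
    intro h0
    apply hcon
    rw [ae_iff]
    simpa using h0
  have hex : ∃ n : ℕ, μ {x | h x + ((n : ℝ≥0∞) + 1)⁻¹ ≤ w x} ≠ 0 := by
    by_contra! hall
    apply hpos
    refine measure_mono_null ?_ (measure_iUnion_null hall)
    intro x hx
    have hx' : h x < w x := hx
    obtain ⟨n, hn⟩ := ENNReal.exists_inv_nat_lt (a := w x - h x) (tsub_pos_of_lt hx').ne'
    refine Set.mem_iUnion.2 ⟨n, ?_⟩
    have h1 : ((n : ℝ≥0∞) + 1)⁻¹ ≤ w x - h x :=
      le_trans (ENNReal.inv_le_inv.2 le_self_add) hn.le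
    calc h x + ((n : ℝ≥0∞) + 1)⁻¹ ≤ h x + (w x - h x) := by gcongr
      _ = w x := add_tsub_cancel_of_le hx'.le
  obtain ⟨n, hn⟩ := hex
  set ε : ℝ≥0∞ := ((n : ℝ≥0∞) + 1)⁻¹ with hε
  have hε0 : ε ≠ 0 := ENNReal.inv_ne_zero.2 (by finiteness)
  have hεt : ε ≠ ⊤ := ENNReal.inv_ne_top.2 (by simp)
  have hEm : MeasurableSet {x | h x + ε ≤ w x} := measurableSet_le (hhm.add_const _) hw
  obtain ⟨F, hFE, hFm, hF0, hFt⟩ : ∃ F, F ⊆ {x | h x + ε ≤ w x} ∧ MeasurableSet F ∧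
      0 < μ F ∧ μ F < ⊤ := by
    by_cases ht : μ {x | h x + ε ≤ w x} = ⊤
    · exact hsf _ hEm ht
    · exact ⟨_, subset_rfl, hEm, pos_iff_ne_zero.2 hn, lt_top_iff_ne_top.2 ht⟩
  have hint : ∫⁻ x, (h x + F.indicator (fun _ => ε) x) ∂μ = ∫⁻ x, h x ∂μ + ε * μ F := by
    rw [lintegral_add_left hhm, lintegral_indicator_const hFm]
  have hfin : ∫⁻ x, h x ∂μ + ε * μ F < ⊤ :=
    ENNReal.add_lt_top.2 ⟨hlt, ENNReal.mul_lt_top hεt.lt_top hFt⟩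
  have hmem : ∫⁻ x, h x ∂μ + ε * μ F ∈ T := by
    refine ⟨fun x => h x + F.indicator (fun _ => ε) x,
      hhm.add (measurable_const.indicator hFm), ?_, ?_, hint⟩
    · intro x
      by_cases hx : x ∈ F
      · simpa [hx] using hFE hx
      · simpa [hx] using hhw x
    · rw [hint]; exact hfin
  have := (le_sSup hmem).trans hge
  exact absurd this (not_le.2 (ENNReal.lt_add_right hlt.ne (mul_ne_zero hε0 hF0.ne')))



/-- General Hardy inequality (Theorem 1, necessity, with strict sublevel sets):
if the Hardy inequality holds with constant `C`, then `B ≤ C`. -/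
theorem general_hardy_inequality_lt_necessity
    {X : Type*} [MeasurableSpace X]
    (μ₁ μ₃ : Measure X) (μ₂ : Measure ℝ)
    (hsf : ∀ E : Set X, MeasurableSet E → μ₁ E = ⊤ →
      ∃ F, F ⊆ E ∧ MeasurableSet F ∧ 0 < μ₁ F ∧ μ₁ F < ⊤)
    (ψ : X → ℝ≥0) (hψ : Measurable ψ)
    (σ : Measure X) (hσ : σ.MutuallySingular μ₁)
    (hdec : μ₃ = μ₁.withDensity (fun x => (ψ x : ℝ≥0∞)) + σ)
    (N : X → ℝ) (hN : Measurable N)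
    (p q p' : ℝ) (hp : 1 < p) (hpq : p ≤ q)
    (hp' : p' = p / (p - 1))
    (C : ℝ) (hC : 0 ≤ C)
    (hineq : ∀ f : X → ℝ≥0∞, Measurable f →
      (∫⁻ r, (∫⁻ x in {x | N x < r}, f x ∂μ₁) ^ q ∂μ₂) ^ (1 / q) ≤
        ENNReal.ofReal C * (∫⁻ x, f x ^ p ∂μ₃) ^ (1 / p)) :
    (⨆ r : ℝ, μ₂ (Set.Ici r) ^ (1 / q) *
      (∫⁻ x in {x | N x < r}, ((ψ x : ℝ≥0∞)) ^ (-(p' / p)) ∂μ₁) ^ (1 / p')) ≤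
      ENNReal.ofReal C := by
  have hp0 : 0 < p := by linarith
  have hq0 : 0 < q := by linarith
  have hp1 : 0 < p - 1 := by linarith
  have hp'0 : 0 < p' := by rw [hp']; positivity
  have hexp : p' / p * (p - 1) = 1 := by rw [hp']; field_simp
  have hconj : 1 / p + 1 / p' = 1 := by rw [hp']; field_simp; ring
  refine iSup_le fun r => ?_
  rcases eq_or_ne (μ₂ (Set.Ici r)) 0 with hm | hm
  · rw [hm, ENNReal.zero_rpow_of_pos (by positivity), zero_mul]; exact zero_le
  set M := μ₂ (Set.Ici r) ^ (1 / q) with hM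
  have hM0 : M ≠ 0 := by
    rw [hM]; intro h0
    rcases ENNReal.rpow_eq_zero_iff.1 h0 with h | h
    · exact hm h.1
    · have : 0 < 1 / q := by positivity
      linarith [h.2]
  have key : ∀ I : ℝ≥0∞, M * I ^ (1 / p') ≤ ENNReal.ofReal C ↔
      I ≤ (ENNReal.ofReal C / M) ^ p' := by
    intro I
    rw [mul_comm, ← ENNReal.le_div_iff_mul_le (Or.inl hM0) (Or.inr ENNReal.ofReal_ne_top),
      one_div, ENNReal.rpow_inv_le_iff hp'0]
  rw [key]
  have hA : MeasurableSet {x | N x < r} := measurableSet_lt hN measurable_const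
  have hψm : Measurable fun x => (ψ x : ℝ≥0∞) := hψ.coe_nnreal_ennreal
  have hwm : Measurable fun x => (ψ x : ℝ≥0∞) ^ (-(p' / p)) := hψm.pow_const _
  rw [← lintegral_indicator hA]
  apply semifinite_lintegral_le μ₁ hsf _ (hwm.indicator hA)
  intro g hgm hgw hgf
  rw [← key]
  obtain ⟨S, hSm, hσS, hμS⟩ := hσ
  set I := ∫⁻ x, g x ∂μ₁ with hI
  rcases eq_or_ne I 0 with hI0 | hI0
  · rw [hI0, ENNReal.zero_rpow_of_pos (by positivity), mul_zero]; exact zero_le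
  have hae : S.indicator g =ᵐ[μ₁] g := by
    have : ∀ᵐ x ∂μ₁, x ∈ S := by rw [ae_iff]; exact hμS
    filter_upwards [this] with x hx
    simp [hx]
  have hfm : Measurable (S.indicator g) := hgm.indicator hSm
  have hH := hineq (S.indicator g) hfm
  have hL : M * I ≤ (∫⁻ t, (∫⁻ x in {x | N x < t}, S.indicator g x ∂μ₁) ^ q ∂μ₂) ^ (1 / q) := by
    have h1 : ∀ t ∈ Set.Ici r, I ^ q ≤ (∫⁻ x in {x | N x < t}, S.indicator g x ∂μ₁) ^ q := by
      intro t ht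
      have ht' : r ≤ t := ht
      have : I ≤ ∫⁻ x in {x | N x < t}, S.indicator g x ∂μ₁ := by
        rw [← lintegral_indicator (measurableSet_lt hN measurable_const)]
        apply lintegral_mono_ae
        filter_upwards [hae] with x hx
        by_cases hxt : N x < t
        · simp only [Set.indicator, Set.mem_setOf_eq, hxt, if_true] at hx ⊢
          exact hx.ge
        · have hxr : ¬ N x < r := fun h => hxt (h.trans_le ht')
          have := hgw x
          simp only [Set.indicator, Set.mem_setOf_eq, hxr, if_false] at this
          exact this.trans zero_le
      gcongr
    have h2 : I ^ q * μ₂ (Set.Ici r) ≤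
        ∫⁻ t, (∫⁻ x in {x | N x < t}, S.indicator g x ∂μ₁) ^ q ∂μ₂ := by
      rw [← setLIntegral_const]
      exact (setLIntegral_mono' measurableSet_Ici h1).trans (setLIntegral_le_lintegral _ _)
    calc M * I = (I ^ q * μ₂ (Set.Ici r)) ^ (1 / q) := by
          rw [ENNReal.mul_rpow_of_nonneg _ _ (by positivity), ← ENNReal.rpow_mul,
            mul_one_div_cancel hq0.ne', ENNReal.rpow_one, mul_comm]
      _ ≤ _ := by gcongr
  have hR : ∫⁻ x, S.indicator g x ^ p ∂μ₃ ≤ I := by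
    rw [hdec, lintegral_add_measure,
      lintegral_withDensity_eq_lintegral_mul _ hψm (hfm.pow_const p)]
    have hz : ∫⁻ x, S.indicator g x ^ p ∂σ = 0 := by
      rw [lintegral_eq_zero_iff (hfm.pow_const p)]
      have : ∀ᵐ x ∂σ, x ∉ S := by rw [ae_iff]; simpa using hσS
      filter_upwards [this] with x hx
      simp [hx, hp0]
    rw [hz, add_zero]
    apply lintegral_mono
    intro x
    have hgx : S.indicator g x ≤ g x := Set.indicator_le_self _ _ x
    have hgw' : g x ≤ (ψ x : ℝ≥0∞) ^ (-(p' / p)) := (hgw x).trans (Set.indicator_le_self _ _ x)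
    show (ψ x : ℝ≥0∞) * S.indicator g x ^ p ≤ g x
    rcases eq_or_ne (ψ x : ℝ≥0∞) 0 with h0 | h0
    · rw [h0, zero_mul]; exact zero_le
    have hb : g x ^ (p - 1) ≤ (ψ x : ℝ≥0∞)⁻¹ := by
      calc g x ^ (p - 1) ≤ ((ψ x : ℝ≥0∞) ^ (-(p' / p))) ^ (p - 1) := by gcongr
        _ = _ := by rw [← ENNReal.rpow_mul, neg_mul, hexp, ENNReal.rpow_neg_one]
    calc (ψ x : ℝ≥0∞) * S.indicator g x ^ p ≤ (ψ x : ℝ≥0∞) * g x ^ p := by gcongr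
      _ = (ψ x : ℝ≥0∞) * (g x ^ (p - 1) * g x) := by
          congr 1
          conv_rhs => rw [← ENNReal.rpow_one (g x), ← ENNReal.rpow_mul, one_mul]
          rw [← ENNReal.rpow_add_of_nonneg _ _ hp1.le zero_le_one]
          congr 1; ring
      _ ≤ (ψ x : ℝ≥0∞) * ((ψ x : ℝ≥0∞)⁻¹ * g x) := by gcongr
      _ = g x := by rw [← mul_assoc, ENNReal.mul_inv_cancel h0 ENNReal.coe_ne_top, one_mul]
  have hfinal : M * I ≤ ENNReal.ofReal C * I ^ (1 / p) := by
    refine hL.trans (hH.trans ?_)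
    gcongr
  have hsplit : I = I ^ (1 / p') * I ^ (1 / p) := by
    rw [← ENNReal.rpow_add_of_nonneg _ _ (by positivity) (by positivity), add_comm, hconj,
      ENNReal.rpow_one]
  have hc0 : I ^ (1 / p) ≠ 0 := by
    intro h0
    rcases ENNReal.rpow_eq_zero_iff.1 h0 with h | h
    · exact hI0 h.1
    · exact hgf.ne h.1
  have hct : I ^ (1 / p) ≠ ⊤ := ENNReal.rpow_ne_top_of_nonneg (by positivity) hgf.ne
  rw [← ENNReal.mul_le_mul_iff_left hc0 hct, mul_assoc, ← hsplit]
  exact hfinal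
end

section
/- Let (X, M) be a measurable space, μ₁ a semi-finite positive measure on (X, M), μ₂ a positive Borel measure on ℝ, and μ₃ a positive measure on (X, M) whose absolutely continuous part with respect to μ₁ has a density ψ : X → [0,∞) with respect to μ₁. Let N : X → ℝ be M-measurable and let 1 < p ≤ q < ∞, with p' = p/(p−1). If C' ≥ 0 is a constant such that (∫_ℝ (∫_{{x : N(x)≤r}} f(x) dμ₁(x))^q dμ₂(r))^{1/q} ≤ C' (∫_X f(x)^p dμ₃(x))^{1/p} for every M-measurable function f : X → [0,+∞], then sup_{r∈ℝ} μ₂([r,+∞))^{1/q} (∫_{{x : N(x)≤r}} ψ(x)^{−p'/p} dμ₁(x))^{1/p'} ≤ C'. -/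
open MeasureTheory ENNReal
open scoped NNReal

theorem semifinite_large {X : Type*} [MeasurableSpace X] (μ : Measure X)
    (hsf : ∀ E : Set X, MeasurableSet E → μ E = ⊤ →
      ∃ F, F ⊆ E ∧ MeasurableSet F ∧ 0 < μ F ∧ μ F < ⊤)
    (E : Set X) (hE : MeasurableSet E) (hE' : μ E = ⊤) (K : ℝ≥0∞) (hK : K ≠ ⊤)
    (hb : ∀ F, F ⊆ E → MeasurableSet F → μ F < ⊤ → μ F ≤ K) : False := by
  let T : Set ℝ≥0∞ := {t | ∃ F, F ⊆ E ∧ MeasurableSet F ∧ μ F < ⊤ ∧ μ F = t}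
  have hTne : T.Nonempty := ⟨0, ∅, by simp, by simp, by simp, by simp⟩
  have hTK : sSup T ≤ K := by
    apply sSup_le
    rintro t ⟨F, h1, h2, h3, rfl⟩
    exact hb F h1 h2 h3
  obtain ⟨u, hu, hlim, huT⟩ := exists_seq_tendsto_sSup hTne (OrderTop.bddAbove T)
  choose F hFE hFm hFt hFu using huT
  let G : Set X := ⋃ n, F n
  have hGE : G ⊆ E := Set.iUnion_subset hFE
  have hGm : MeasurableSet G := MeasurableSet.iUnion hFm
  have hGK : μ G ≤ K := by
    have hmono : Monotone (Set.accumulate F) := Set.monotone_accumulate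
    have : G = ⋃ n, Set.accumulate F n := (Set.iUnion_accumulate).symm
    rw [this, hmono.measure_iUnion]
    refine iSup_le fun n => hb _ ?_ ?_ ?_
    · exact Set.iUnion₂_subset fun i _ => hFE i
    · exact MeasurableSet.biUnion (Set.to_countable _) fun i _ => hFm i
    · rw [Set.accumulate_def]
      exact measure_biUnion_lt_top (Set.finite_Iic n) fun i _ => hFt i
  have hGt : μ G < ⊤ := lt_of_le_of_lt hGK hK.lt_top
  have hGs : sSup T ≤ μ G := by
    refine le_of_tendsto' hlim fun n => ?_
    rw [← hFu n]
    exact measure_mono (Set.subset_iUnion F n)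
  have hdiff : μ (E \ G) = ⊤ := by
    by_contra h
    have : μ E ≤ μ (E \ G) + μ G := by
      refine (measure_mono ?_).trans (measure_union_le _ _)
      simp
    rw [hE'] at this
    exact (ENNReal.add_lt_top.2 ⟨lt_top_iff_ne_top.2 h, hGt⟩).not_ge this
  obtain ⟨H, hH, hHm, hH0, hHt⟩ := hsf _ (hE.diff hGm) hdiff
  have hd : Disjoint G H := Set.disjoint_left.2 fun x hx hx' => (hH hx').2 hx
  have hU : μ (G ∪ H) = μ G + μ H := measure_union hd hHm
  have : μ (G ∪ H) ≤ sSup T := le_sSup ⟨G ∪ H, Set.union_subset hGE (hH.trans Set.sdiff_subset),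
    hGm.union hHm, by rw [hU]; exact ENNReal.add_lt_top.2 ⟨hGt, hHt⟩, rfl⟩
  rw [hU] at this
  exact (ENNReal.lt_add_right hGt.ne hH0.ne').not_ge (this.trans hGs)

/-- General Hardy inequality (Theorem 2, necessity, with non-strict sublevel sets):
if the Hardy inequality holds with constant `C'`, then `B' ≤ C'`. -/
theorem general_hardy_inequality_le_necessity
    {X : Type*} [MeasurableSpace X]
    (μ₁ μ₃ : Measure X) (μ₂ : Measure ℝ)
    (hsf : ∀ E : Set X, MeasurableSet E → μ₁ E = ⊤ →
      ∃ F, F ⊆ E ∧ MeasurableSet F ∧ 0 < μ₁ F ∧ μ₁ F < ⊤)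
    (ψ : X → ℝ≥0) (hψ : Measurable ψ)
    (σ : Measure X) (hσ : σ.MutuallySingular μ₁)
    (hdec : μ₃ = μ₁.withDensity (fun x => (ψ x : ℝ≥0∞)) + σ)
    (N : X → ℝ) (hN : Measurable N)
    (p q p' : ℝ) (hp : 1 < p) (hpq : p ≤ q)
    (hp' : p' = p / (p - 1))
    (C' : ℝ) (hC' : 0 ≤ C')
    (hineq : ∀ f : X → ℝ≥0∞, Measurable f →
      (∫⁻ r, (∫⁻ x in {x | N x ≤ r}, f x ∂μ₁) ^ q ∂μ₂) ^ (1 / q) ≤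
        ENNReal.ofReal C' * (∫⁻ x, f x ^ p ∂μ₃) ^ (1 / p)) :
    (⨆ r : ℝ, μ₂ (Set.Ici r) ^ (1 / q) *
      (∫⁻ x in {x | N x ≤ r}, ((ψ x : ℝ≥0∞)) ^ (-(p' / p)) ∂μ₁) ^ (1 / p')) ≤
      ENNReal.ofReal C' := by
  have hp0 : 0 < p := by linarith
  have hq0 : 0 < q := by linarith
  have hp1 : 0 < p - 1 := by linarith
  have hp'0 : 0 < p' := by rw [hp']; positivity
  have hpp : p' / p = 1 / (p - 1) := by rw [hp']; field_simp
  have hinv : 1 / p' = 1 - 1 / p := by rw [hp']; field_simp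
  refine iSup_le fun r => ?_
  set A : Set X := {x | N x ≤ r} with hA
  have hAm : MeasurableSet A := measurableSet_le hN measurable_const
  set m := μ₂ (Set.Ici r) with hm
  by_cases hm0 : m = 0
  · rw [hm0, ENNReal.zero_rpow_of_pos (by positivity), zero_mul]; exact zero_le
  have hmq0 : m ^ (1 / q) ≠ 0 := by
    simp only [ne_eq, ENNReal.rpow_eq_zero_iff]
    rintro (h | h)
    · exact hm0 h.1
    · have : 0 < 1 / q := by positivity
      linarith [h.2]
  set c := ENNReal.ofReal C' with hc
  have hct : c ≠ ⊤ := ENNReal.ofReal_ne_top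
  -- key estimate
  have key : ∀ g : X → ℝ≥0, Measurable g → (∀ x, (g x : ℝ≥0∞) ≤ (ψ x : ℝ≥0∞) ^ (-(p' / p))) →
      ∫⁻ x in A, (g x : ℝ≥0∞) ∂μ₁ < ⊤ →
      ∫⁻ x in A, (g x : ℝ≥0∞) ∂μ₁ ≤ (c / m ^ (1 / q)) ^ p' := by
    intro g hg hgW hfin
    set I := ∫⁻ x in A, (g x : ℝ≥0∞) ∂μ₁ with hI
    by_cases hI0 : I = 0
    · rw [hI0]; exact zero_le
    obtain ⟨S, hSm, hσS, hμS⟩ := hσ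
    let f : X → ℝ≥0∞ := (A ∩ S).indicator (fun x => (g x : ℝ≥0∞))
    have hgm : Measurable (fun x => (g x : ℝ≥0∞)) := hg.coe_nnreal_ennreal
    have hfm : Measurable f := hgm.indicator (hAm.inter hSm)
    have hSae : ∀ᵐ x ∂μ₁, x ∈ S := by
      rw [ae_iff]; exact hμS
    have hfI : ∀ s, r ≤ s → I = ∫⁻ x in {x | N x ≤ s}, f x ∂μ₁ := by
      intro s hs
      have hsub : A ⊆ {x | N x ≤ s} := fun x hx => le_trans (show N x ≤ r from hx) hs
      have h1 : ∫⁻ x in {x | N x ≤ s}, f x ∂μ₁ =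
          ∫⁻ x in {x | N x ≤ s}, A.indicator (fun x => (g x : ℝ≥0∞)) x ∂μ₁ := by
        refine lintegral_congr_ae (ae_restrict_of_ae ?_)
        filter_upwards [hSae] with x hx
        by_cases hxA : x ∈ A <;> simp [f, hx, hxA]
      rw [h1, lintegral_indicator hAm, Measure.restrict_restrict hAm,
        Set.inter_eq_left.2 hsub]
    have hleft : m * I ^ q ≤ ∫⁻ r, (∫⁻ x in {x | N x ≤ r}, f x ∂μ₁) ^ q ∂μ₂ := by
      calc m * I ^ q = ∫⁻ s in Set.Ici r, I ^ q ∂μ₂ := by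
            rw [setLIntegral_const, mul_comm]
        _ ≤ ∫⁻ s in Set.Ici r, (∫⁻ x in {x | N x ≤ s}, f x ∂μ₁) ^ q ∂μ₂ := by
            refine setLIntegral_mono' measurableSet_Ici fun s hs => ?_
            rw [← hfI s hs]
        _ ≤ _ := setLIntegral_le_lintegral _ _
    have hpt : ∀ x, (ψ x : ℝ≥0∞) * (g x : ℝ≥0∞) ^ p ≤ g x := by
      intro x
      by_cases h0 : ψ x = 0
      · simp [h0]
      have hg1 : (g x : ℝ≥0∞) ^ (p - 1) ≤ (ψ x : ℝ≥0∞)⁻¹ := by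
        have := ENNReal.rpow_le_rpow (hgW x) hp1.le
        rw [← ENNReal.rpow_mul, hpp] at this
        have e : -(1 / (p - 1)) * (p - 1) = -1 := by field_simp
        rwa [e, ENNReal.rpow_neg_one] at this
      have e : (g x : ℝ≥0∞) ^ p = (g x : ℝ≥0∞) ^ (p - 1) * g x := by
        conv_lhs => rw [show p = (p - 1) + 1 by ring]
        rw [ENNReal.rpow_add_of_nonneg _ _ hp1.le zero_le_one, ENNReal.rpow_one]
      rw [e, ← mul_assoc]
      calc _ ≤ (ψ x : ℝ≥0∞) * (ψ x : ℝ≥0∞)⁻¹ * g x := by gcongr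
        _ = g x := by
          rw [ENNReal.mul_inv_cancel (by simpa using h0) ENNReal.coe_ne_top, one_mul]
    have hright : ∫⁻ x, f x ^ p ∂μ₃ ≤ I := by
      have hσ0 : ∫⁻ x, f x ^ p ∂σ = 0 := by
        rw [lintegral_eq_zero_iff (hfm.pow_const p)]
        have : ∀ᵐ x ∂σ, x ∉ S := by
          rw [ae_iff]; simpa using hσS
        filter_upwards [this] with x hx
        simp [f, hx, hp0]
      rw [hdec, lintegral_add_measure, hσ0, add_zero,
        lintegral_withDensity_eq_lintegral_mul _ hψ.coe_nnreal_ennreal (hfm.pow_const p),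
        hI, ← lintegral_indicator hAm]
      refine lintegral_mono fun x => ?_
      by_cases hx : x ∈ A ∩ S
      · have := hpt x
        simpa [f, hx, hx.1, hx.2] using this
      · simp [f, hx, hp0]
    have h1 : m ^ (1 / q) * I ≤ c * I ^ (1 / p) := by
      calc m ^ (1 / q) * I = (m * I ^ q) ^ (1 / q) := by
            rw [ENNReal.mul_rpow_of_nonneg _ _ (by positivity), ← ENNReal.rpow_mul,
              mul_one_div_cancel hq0.ne', ENNReal.rpow_one]
        _ ≤ _ := ENNReal.rpow_le_rpow hleft (by positivity)
        _ ≤ _ := hineq f hfm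
        _ ≤ _ := by gcongr
    have hIp0 : I ^ (1 / p) ≠ 0 := (ENNReal.rpow_pos (pos_iff_ne_zero.2 hI0) hfin.ne).ne'
    have hIpt : I ^ (1 / p) ≠ ⊤ := ENNReal.rpow_ne_top_of_nonneg (by positivity) hfin.ne
    have h2 : I ^ (1 / p') * m ^ (1 / q) ≤ c := by
      have e : I = I ^ (1 / p') * I ^ (1 / p) := by
        rw [← ENNReal.rpow_add _ _ hI0 hfin.ne, hinv, sub_add_cancel, ENNReal.rpow_one]
      have h3 : (I ^ (1 / p') * m ^ (1 / q)) * I ^ (1 / p) ≤ c * I ^ (1 / p) := by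
        calc _ = m ^ (1 / q) * (I ^ (1 / p') * I ^ (1 / p)) := by ring
          _ = m ^ (1 / q) * I := by rw [← e]
          _ ≤ _ := h1
      exact (ENNReal.mul_le_mul_iff_left hIp0 hIpt).1 h3
    have h4 : I ^ (1 / p') ≤ c / m ^ (1 / q) :=
      (ENNReal.le_div_iff_mul_le (Or.inl hmq0) (Or.inr hct)).2 h2
    have := ENNReal.rpow_le_rpow h4 hp'0.le
    rwa [← ENNReal.rpow_mul, one_div_mul_cancel hp'0.ne', ENNReal.rpow_one] at this
  set K := (c / m ^ (1 / q)) ^ p' with hK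
  have hKt : K ≠ ⊤ := ENNReal.rpow_ne_top_of_nonneg hp'0.le (ENNReal.div_ne_top hct hmq0)
  have hW : ∫⁻ x in A, (ψ x : ℝ≥0∞) ^ (-(p' / p)) ∂μ₁ ≤ K := by
    rw [lintegral_eq_nnreal]
    refine iSup₂_le fun φ hφ => ?_
    have hφe : (φ.map ((↑) : ℝ≥0 → ℝ≥0∞)).lintegral (μ₁.restrict A) =
        ∫⁻ x in A, (φ x : ℝ≥0∞) ∂μ₁ := by
      rw [← SimpleFunc.lintegral_eq_lintegral]; rfl
    by_cases hfin : ∫⁻ x in A, (φ x : ℝ≥0∞) ∂μ₁ < ⊤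
    · rw [hφe]; exact key φ φ.measurable hφ hfin
    exfalso
    rw [← hφe, not_lt, top_le_iff, SimpleFunc.map_lintegral, ENNReal.sum_eq_top] at hfin
    obtain ⟨y, hy, hyt⟩ := hfin
    have hy2 : y ≠ 0 ∧ μ₁.restrict A (φ ⁻¹' {y}) = ⊤ := by
      rcases ENNReal.mul_eq_top.1 hyt with h | h
      · exact ⟨by simpa using h.1, h.2⟩
      · exact absurd h.1 ENNReal.coe_ne_top
    obtain ⟨hy0, hyT⟩ := hy2
    have hEm : MeasurableSet (φ ⁻¹' {y}) := φ.measurableSet_preimage _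
    rw [Measure.restrict_apply hEm] at hyT
    refine semifinite_large μ₁ hsf _ (hEm.inter hAm) hyT (K / y)
      (ENNReal.div_ne_top hKt (by simpa using hy0)) fun F hF hFm hFt => ?_
    have hint : ∫⁻ x in A, ((F.indicator (fun _ => y) x : ℝ≥0) : ℝ≥0∞) ∂μ₁ = y * μ₁ F := by
      have : ∀ x, ((F.indicator (fun _ => y) x : ℝ≥0) : ℝ≥0∞) =
          F.indicator (fun _ => (y : ℝ≥0∞)) x := by
        intro x; by_cases hx : x ∈ F <;> simp [hx]
      simp_rw [this]
      rw [lintegral_indicator hFm, setLIntegral_const, Measure.restrict_apply hFm,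
        Set.inter_eq_left.2 fun x hx => (hF hx).2]
    have := key (F.indicator (fun _ => y)) (measurable_const.indicator hFm) (fun x => by
      by_cases hx : x ∈ F
      · have h1 : φ x = y := (hF hx).1
        have h2 := hφ x
        rw [h1] at h2
        simpa [hx] using h2
      · simp [hx]) (by rw [hint]; exact ENNReal.mul_lt_top ENNReal.coe_lt_top hFt)
    rw [hint, mul_comm] at this
    exact (ENNReal.le_div_iff_mul_le (Or.inl (by simpa using hy0)) (Or.inr hKt)).2 this
  have h5 := ENNReal.rpow_le_rpow hW (show 0 ≤ 1 / p' by positivity)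
  rw [hK, ← ENNReal.rpow_mul, mul_one_div_cancel hp'0.ne', ENNReal.rpow_one] at h5
  rw [mul_comm]
  exact (ENNReal.le_div_iff_mul_le (Or.inl hmq0) (Or.inr hct)).1 h5
end

section
/- Let (X, M) be a measurable space, μ₁ a semi-finite positive measure on (X, M), μ₂ a positive Borel measure on ℝ, and μ₃ a positive measure on (X, M) whose absolutely continuous part with respect to μ₁ has a density ψ : X → [0,∞) with respect to μ₁. Let N : X → ℝ be M-measurable and let 1 ≤ q < ∞. Set B₁ := sup_{r∈ℝ} μ₂([r,+∞))^{1/q} · essSup_{μ₁}( 1_{{N<r}} · ψ^{−1} ), where essSup_{μ₁} denotes the μ₁-essential supremum and 1_{{N<r}} is the indicator of {x : N(x) < r}. Then there is a finite constant C ≥ 0 such that (∫_ℝ (∫_{{x : N(x)<r}} f(x) dμ₁(x))^q dμ₂(r))^{1/q} ≤ C ∫_X f(x) dμ₃(x) for every M-measurable f : X → [0,+∞] if and only if B₁ is finite; moreover the minimal such constant C equals B₁. -/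
open MeasureTheory ENNReal
open scoped NNReal


lemma hardy_tsum_aux {ι : Type*} [Countable ι] (μ₂ : Measure ℝ) (q : ℝ) (hq : 1 ≤ q)
    (a : ι → ℝ → ℝ≥0∞) (ha : ∀ i, Measurable (a i)) :
    (∫⁻ r, (∑' i, a i r) ^ q ∂μ₂) ^ (1 / q) ≤ ∑' i, (∫⁻ r, (a i r) ^ q ∂μ₂) ^ (1 / q) := by
  have hq0 : 0 < q := by linarith
  have hfin : ∀ s : Finset ι, (∫⁻ r, (∑ i ∈ s, a i r) ^ q ∂μ₂) ^ (1 / q) ≤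
      ∑ i ∈ s, (∫⁻ r, (a i r) ^ q ∂μ₂) ^ (1 / q) := by
    classical
    intro s
    induction s using Finset.induction_on with
    | empty => simp [hq0]
    | insert i s his ih =>
      simp only [Finset.sum_insert his]
      refine le_trans (ENNReal.lintegral_Lp_add_le (f := a i) (g := fun r => ∑ i ∈ s, a i r)
        (ha i).aemeasurable (Finset.measurable_fun_sum s (fun i _ => ha i)).aemeasurable hq) ?_
      gcongr
  have h1 : ∀ r, (∑' i, a i r) ^ q = ⨆ s : Finset ι, (∑ i ∈ s, a i r) ^ q := by
    intro r
    rw [ENNReal.tsum_eq_iSup_sum]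
    exact (ENNReal.orderIsoRpow q hq0).map_iSup _
  simp_rw [h1]
  rw [lintegral_iSup_directed]
  · rw [show ∀ x : ℝ≥0∞, x ^ (1 / q) = ENNReal.orderIsoRpow (1 / q) (by positivity) x from
      fun x => rfl, OrderIso.map_iSup]
    refine iSup_le fun s => ?_
    exact (hfin s).trans (ENNReal.sum_le_tsum s)
  · intro s
    exact ((Finset.measurable_fun_sum s (fun i _ => ha i)).pow_const q).aemeasurable
  · classical
    intro s t
    refine ⟨s ∪ t, fun r => ?_, fun r => ?_⟩
    · exact ENNReal.rpow_le_rpow (Finset.sum_le_sum_of_subset Finset.subset_union_left) hq0.le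
    · exact ENNReal.rpow_le_rpow (Finset.sum_le_sum_of_subset Finset.subset_union_right) hq0.le

lemma hardy_disc_aux {X : Type*} [MeasurableSpace X] (μ₁ : Measure X) (μ₂ : Measure ℝ)
    (q : ℝ) (hq : 1 ≤ q) (f : X → ℝ≥0∞) (hf : Measurable f) (K : X → ℤ) (hK : Measurable K)
    (t : ℤ → ℝ) :
    (∫⁻ r, (∫⁻ x in {x | t (K x) < r}, f x ∂μ₁) ^ q ∂μ₂) ^ (1 / q) ≤
      ∫⁻ x, f x * μ₂ (Set.Ioi (t (K x))) ^ (1 / q) ∂μ₁ := by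
  have hq0 : 0 < q := by linarith
  set c : Measure ℤ := (μ₁.withDensity f).map K with hc
  have key : ∀ G : ℤ → ℝ≥0∞, ∫⁻ x, f x * G (K x) ∂μ₁ = ∑' k, G k * c {k} := by
    intro G
    have hG : Measurable G := measurable_of_countable G
    rw [← lintegral_countable', hc, lintegral_map hG hK]
    exact (lintegral_withDensity_eq_lintegral_mul μ₁ hf (hG.comp hK)).symm
  have h1 : ∀ r, ∫⁻ x in {x | t (K x) < r}, f x ∂μ₁ =
      ∑' k, (Set.Ioi (t k)).indicator (fun _ => 1) r * c {k} := by
    intro r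
    have hm : MeasurableSet {x | t (K x) < r} :=
      measurableSet_lt ((measurable_of_countable t).comp hK) measurable_const
    rw [← key (fun k => (Set.Ioi (t k)).indicator (fun _ => 1) r), ← lintegral_indicator hm]
    congr 1
    ext x
    by_cases h : t (K x) < r <;> simp [Set.indicator, h]
  simp_rw [h1]
  rw [key (fun k => μ₂ (Set.Ioi (t k)) ^ (1 / q))]
  refine (hardy_tsum_aux μ₂ q hq _ ?_).trans ?_
  · intro k
    exact (measurable_const.indicator measurableSet_Ioi).mul_const _
  · refine ENNReal.tsum_le_tsum fun k => le_of_eq ?_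
    have : ∀ r, ((Set.Ioi (t k)).indicator (fun _ => (1 : ℝ≥0∞)) r * c {k}) ^ q =
        (Set.Ioi (t k)).indicator (fun _ => (c {k}) ^ q) r := by
      intro r
      by_cases h : t k < r <;> simp [Set.indicator, h, hq0]
    simp_rw [this]
    rw [lintegral_indicator_const measurableSet_Ioi, ENNReal.mul_rpow_of_nonneg _ _ (by positivity),
      ← ENNReal.rpow_mul, mul_one_div_cancel hq0.ne', ENNReal.rpow_one, mul_comm]

lemma hardy_upper {X : Type*} [MeasurableSpace X] (μ₁ : Measure X) (μ₂ : Measure ℝ)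
    (q : ℝ) (hq : 1 ≤ q) (ψ : X → ℝ≥0) (hψ : Measurable ψ) (N : X → ℝ) (hN : Measurable N)
    (B : ℝ≥0∞) (hBtop : B ≠ ⊤)
    (hB : ∀ r : ℝ, μ₂ (Set.Ici r) ^ (1 / q) *
      essSup (Set.indicator {x | N x < r} (fun x => ((ψ x : ℝ≥0∞))⁻¹)) μ₁ ≤ B)
    (f : X → ℝ≥0∞) (hf : Measurable f) :
    (∫⁻ r, (∫⁻ x in {x | N x < r}, f x ∂μ₁) ^ q ∂μ₂) ^ (1 / q) ≤
      B * ∫⁻ x, f x ∂(μ₁.withDensity (fun x => (ψ x : ℝ≥0∞))) := by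
  have hq0 : 0 < q := by linarith
  have hψ' : Measurable (fun x => (ψ x : ℝ≥0∞)) := hψ.coe_nnreal_ennreal
  set t : ℕ → ℤ → ℝ := fun n k => ((k : ℝ) + 1) / 2 ^ n with ht
  set K : ℕ → X → ℤ := fun n x => ⌊2 ^ n * N x⌋ with hKdef
  have hK : ∀ n, Measurable (K n) := fun n => (hN.const_mul _).floor
  have hgt : ∀ n x, N x < t n (K n x) := by
    intro n x
    rw [ht, hKdef]
    simp only
    rw [lt_div_iff₀ (by positivity), mul_comm]
    exact Int.lt_floor_add_one _
  have hle : ∀ n x, t n (K n x) ≤ N x + 1 / 2 ^ n := by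
    intro n x
    rw [ht, hKdef]
    simp only
    rw [div_le_iff₀ (by positivity), add_mul, one_div, inv_mul_cancel₀ (by positivity)]
    have := Int.floor_le (2 ^ n * N x)
    linarith
  have hanti : ∀ x, Antitone (fun n => t n (K n x)) := by
    intro x
    refine antitone_nat_of_succ_le fun n => ?_
    have h1 : K (n + 1) x + 1 ≤ 2 * (K n x + 1) := by
      have : K (n + 1) x < 2 * (K n x + 1) := by
        rw [hKdef]
        simp only
        rw [Int.floor_lt]
        push_cast
        have := Int.lt_floor_add_one (2 ^ n * N x)
        rw [pow_succ]
        linarith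
      omega
    have h2 : (K (n + 1) x : ℝ) + 1 ≤ 2 * (K n x + 1) := by exact_mod_cast h1
    simp only [ht]
    rw [div_le_div_iff₀ (by positivity) (by positivity), pow_succ]
    have : (0 : ℝ) < 2 ^ n := by positivity
    nlinarith
  have hae : ∀ᵐ x ∂μ₁, ∀ n : ℕ, ∀ k : ℤ, N x < t n k →
      μ₂ (Set.Ici (t n k)) ^ (1 / q) ≤ B * ψ x := by
    rw [ae_all_iff]; intro n
    rw [ae_all_iff]; intro k
    filter_upwards [ENNReal.ae_le_essSup (μ := μ₁)
      (Set.indicator {x | N x < t n k} (fun x => ((ψ x : ℝ≥0∞))⁻¹))] with x hx hlt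
    rw [Set.indicator_of_mem (by exact hlt)] at hx
    have h := (mul_le_mul_right hx (μ₂ (Set.Ici (t n k)) ^ (1 / q))).trans (hB _)
    by_cases h0 : ψ x = 0
    · rw [h0] at h
      by_cases hm : μ₂ (Set.Ici (t n k)) ^ (1 / q) = 0
      · rw [hm]; exact zero_le
      · exfalso
        rw [ENNReal.coe_zero, ENNReal.inv_zero, ENNReal.mul_top hm] at h
        exact hBtop (top_le_iff.1 h)
    · rw [← div_eq_mul_inv] at h
      exact (ENNReal.div_le_iff (by simpa using h0) ENNReal.coe_ne_top).1 h
  have hn : ∀ n, (∫⁻ r, (∫⁻ x in {x | t n (K n x) < r}, f x ∂μ₁) ^ q ∂μ₂) ^ (1 / q) ≤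
      B * ∫⁻ x, f x ∂(μ₁.withDensity (fun x => (ψ x : ℝ≥0∞))) := by
    intro n
    refine (hardy_disc_aux μ₁ μ₂ q hq f hf (K n) (hK n) (t n)).trans ?_
    rw [lintegral_withDensity_eq_lintegral_mul _ hψ' hf, ← lintegral_const_mul _ (hψ'.mul hf)]
    refine lintegral_mono_ae ?_
    filter_upwards [hae] with x hx
    have h1 : μ₂ (Set.Ioi (t n (K n x))) ^ (1 / q) ≤ B * ψ x :=
      (ENNReal.rpow_le_rpow (measure_mono Set.Ioi_subset_Ici_self) (by positivity)).trans
        (hx n _ (hgt n x))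
    calc f x * μ₂ (Set.Ioi (t n (K n x))) ^ (1 / q) ≤ f x * (B * ψ x) := by gcongr
      _ = B * (((fun x => (ψ x : ℝ≥0∞)) * f) x) := by simp only [Pi.mul_apply]; ring
  have hsets : ∀ r, Monotone (fun n => {x | t n (K n x) < r}) := by
    intro r m n hmn x hx
    exact lt_of_le_of_lt (hanti x hmn) hx
  have hU : ∀ r, {x | N x < r} = ⋃ n, {x | t n (K n x) < r} := by
    intro r
    ext x
    simp only [Set.mem_ofPred_eq, Set.mem_iUnion]
    constructor
    · intro h
      obtain ⟨n, hn⟩ := exists_pow_lt_of_lt_one (sub_pos.2 h) (by norm_num : (1 / 2 : ℝ) < 1)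
      refine ⟨n, lt_of_le_of_lt (hle n x) ?_⟩
      rw [one_div_pow] at hn
      linarith
    · rintro ⟨n, h⟩
      exact (hgt n x).trans h
  have h1 : ∀ r, (∫⁻ x in {x | N x < r}, f x ∂μ₁) ^ q =
      ⨆ n, (∫⁻ x in {x | t n (K n x) < r}, f x ∂μ₁) ^ q := by
    intro r
    rw [hU r, setLIntegral_iUnion_of_directed f (hsets r).directed_le]
    exact (ENNReal.orderIsoRpow q hq0).map_iSup _
  simp_rw [h1]
  rw [lintegral_iSup]
  · rw [show ∀ x : ℝ≥0∞, x ^ (1 / q) = ENNReal.orderIsoRpow (1 / q) (by positivity) x from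
      fun x => rfl, OrderIso.map_iSup]
    exact iSup_le hn
  · intro n
    refine Measurable.pow_const (Monotone.measurable ?_) q
    intro r s hrs
    exact lintegral_mono_set fun x hx => lt_of_lt_of_le hx hrs
  · intro m n hmn r
    exact ENNReal.rpow_le_rpow (lintegral_mono_set (hsets r hmn)) hq0.le

lemma hardy_lower {X : Type*} [MeasurableSpace X]
    (μ₁ σ : Measure X) (μ₂ : Measure ℝ)
    (hsf : ∀ E : Set X, MeasurableSet E → μ₁ E = ⊤ →
      ∃ F, F ⊆ E ∧ MeasurableSet F ∧ 0 < μ₁ F ∧ μ₁ F < ⊤)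
    (ψ : X → ℝ≥0) (hψ : Measurable ψ) (hσ : σ.MutuallySingular μ₁)
    (N : X → ℝ) (hN : Measurable N) (q : ℝ) (hq : 1 ≤ q) (C : ℝ≥0∞)
    (hC : ∀ f : X → ℝ≥0∞, Measurable f →
        (∫⁻ r, (∫⁻ x in {x | N x < r}, f x ∂μ₁) ^ q ∂μ₂) ^ (1 / q) ≤
          C * ∫⁻ x, f x ∂(μ₁.withDensity (fun x => (ψ x : ℝ≥0∞)) + σ)) (r : ℝ) :
    μ₂ (Set.Ici r) ^ (1 / q) *
      essSup (Set.indicator {x | N x < r} (fun x => ((ψ x : ℝ≥0∞))⁻¹)) μ₁ ≤ C := by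
  have hq0 : 0 < q := by linarith
  have hψ' : Measurable (fun x => (ψ x : ℝ≥0∞)) := hψ.coe_nnreal_ennreal
  refine ENNReal.mul_le_of_forall_lt fun a' ha' b hb => ?_
  refine (mul_le_mul_left ha'.le b).trans ?_
  rcases eq_or_ne b 0 with rfl | hb0
  · simp
  have hbtop : b ≠ ⊤ := (lt_top_of_lt hb).ne
  obtain ⟨Z, hZ, hσZ, hμZ⟩ := hσ
  set E : Set X := {x | N x < r} ∩ {x | b < ((ψ x : ℝ≥0∞))⁻¹} with hE
  have hEm : MeasurableSet E :=
    (measurableSet_lt hN measurable_const).inter (measurableSet_lt measurable_const hψ'.inv)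
  have hEpos : μ₁ E ≠ 0 := by
    intro h0
    refine absurd hb (not_lt.2 ?_)
    refine essSup_le_of_ae_le b ?_
    have : ∀ᵐ x ∂μ₁, x ∉ E := measure_eq_zero_iff_ae_notMem.1 h0
    filter_upwards [this] with x hx
    by_cases h : N x < r
    · rw [Set.indicator_of_mem (by exact h)]
      by_contra hlt
      exact hx ⟨h, not_le.1 hlt⟩
    · rw [Set.indicator_of_notMem (by exact h)]
      exact zero_le
  have hE' : μ₁ (E ∩ Z) ≠ 0 := by
    rw [measure_inter_conull hμZ]; exact hEpos
  obtain ⟨F, hFE, hFm, hF0, hFt⟩ : ∃ F, F ⊆ E ∩ Z ∧ MeasurableSet F ∧ 0 < μ₁ F ∧ μ₁ F < ⊤ := by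
    by_cases h : μ₁ (E ∩ Z) = ⊤
    · exact hsf _ (hEm.inter hZ) h
    · exact ⟨E ∩ Z, le_rfl, hEm.inter hZ, pos_iff_ne_zero.2 hE', lt_top_iff_ne_top.2 h⟩
  have hmain := hC (F.indicator fun _ => 1) (measurable_const.indicator hFm)
  have hL : μ₂ (Set.Ici r) ^ (1 / q) * μ₁ F ≤
      (∫⁻ s, (∫⁻ x in {x | N x < s}, F.indicator (fun _ => 1) x ∂μ₁) ^ q ∂μ₂) ^ (1 / q) := by
    have h2 : μ₂ (Set.Ici r) ^ (1 / q) * μ₁ F = (μ₁ F ^ q * μ₂ (Set.Ici r)) ^ (1 / q) := by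
      rw [ENNReal.mul_rpow_of_nonneg _ _ (by positivity),
        ← ENNReal.rpow_mul, mul_one_div_cancel hq0.ne', ENNReal.rpow_one, mul_comm]
    rw [h2, ← lintegral_indicator_const measurableSet_Ici]
    refine ENNReal.rpow_le_rpow (lintegral_mono fun s => ?_) (by positivity)
    by_cases h : r ≤ s
    · rw [Set.indicator_of_mem (by exact h)]
      refine ENNReal.rpow_le_rpow ?_ hq0.le
      rw [lintegral_indicator_const hFm, one_mul, Measure.restrict_apply hFm,
        Set.inter_eq_left.2]
      intro x hx
      exact lt_of_lt_of_le (hFE hx).1.1 h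
    · rw [Set.indicator_of_notMem (by exact h)]
      exact zero_le
  have hR : ∫⁻ x, F.indicator (fun _ => 1) x ∂(μ₁.withDensity (fun x => (ψ x : ℝ≥0∞)) + σ) ≤
      b⁻¹ * μ₁ F := by
    rw [lintegral_indicator_const hFm, one_mul, Measure.add_apply,
      measure_mono_null (fun x hx => (hFE hx).2) hσZ, add_zero, withDensity_apply _ hFm,
      ← setLIntegral_const]
    refine setLIntegral_mono measurable_const fun x hx => ?_
    exact (ENNReal.lt_inv_iff_lt_inv.1 (hFE hx).1.2).le
  have h3 : μ₂ (Set.Ici r) ^ (1 / q) * μ₁ F ≤ (C * b⁻¹) * μ₁ F := by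
    rw [mul_assoc]
    exact hL.trans (hmain.trans (by gcongr))
  have h4 : μ₂ (Set.Ici r) ^ (1 / q) ≤ C * b⁻¹ :=
    (ENNReal.mul_le_mul_iff_left hF0.ne' hFt.ne).1 h3
  rw [← div_eq_mul_inv] at h4
  exact (ENNReal.le_div_iff_mul_le (Or.inl hb0) (Or.inl hbtop)).1 h4

/-- The case `p = 1` of the general Hardy inequality: the inequality
holds with some finite constant iff `B₁` is finite, and the minimal constant equals `B₁`. -/
theorem general_hardy_inequality_p_eq_one
    {X : Type*} [MeasurableSpace X]
    (μ₁ μ₃ : Measure X) (μ₂ : Measure ℝ)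
    (hsf : ∀ E : Set X, MeasurableSet E → μ₁ E = ⊤ →
      ∃ F, F ⊆ E ∧ MeasurableSet F ∧ 0 < μ₁ F ∧ μ₁ F < ⊤)
    (ψ : X → ℝ≥0) (hψ : Measurable ψ)
    (σ : Measure X) (hσ : σ.MutuallySingular μ₁)
    (hdec : μ₃ = μ₁.withDensity (fun x => (ψ x : ℝ≥0∞)) + σ)
    (N : X → ℝ) (hN : Measurable N)
    (q : ℝ) (hq : 1 ≤ q)
    (B₁ : ℝ≥0∞)
    (hB₁ : B₁ = ⨆ r : ℝ, μ₂ (Set.Ici r) ^ (1 / q) *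
      essSup (Set.indicator {x | N x < r} (fun x => ((ψ x : ℝ≥0∞))⁻¹)) μ₁) :
    ((∃ C : ℝ≥0∞, C ≠ ⊤ ∧ ∀ f : X → ℝ≥0∞, Measurable f →
        (∫⁻ r, (∫⁻ x in {x | N x < r}, f x ∂μ₁) ^ q ∂μ₂) ^ (1 / q) ≤
          C * ∫⁻ x, f x ∂μ₃) ↔ B₁ ≠ ⊤) ∧
      (B₁ ≠ ⊤ → IsLeast {C : ℝ≥0∞ | ∀ f : X → ℝ≥0∞, Measurable f →
        (∫⁻ r, (∫⁻ x in {x | N x < r}, f x ∂μ₁) ^ q ∂μ₂) ^ (1 / q) ≤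
          C * ∫⁻ x, f x ∂μ₃} B₁) := by
  subst hdec
  have hup : B₁ ≠ ⊤ → ∀ f : X → ℝ≥0∞, Measurable f →
        (∫⁻ r, (∫⁻ x in {x | N x < r}, f x ∂μ₁) ^ q ∂μ₂) ^ (1 / q) ≤
          B₁ * ∫⁻ x, f x ∂(μ₁.withDensity (fun x => (ψ x : ℝ≥0∞)) + σ) := by
    intro hB f hf
    refine (hardy_upper μ₁ μ₂ q hq ψ hψ N hN B₁ hB ?_ f hf).trans ?_
    · intro r
      rw [hB₁]
      exact le_iSup (fun r : ℝ => μ₂ (Set.Ici r) ^ (1 / q) *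
        essSup (Set.indicator {x | N x < r} (fun x => ((ψ x : ℝ≥0∞))⁻¹)) μ₁) r
    · rw [lintegral_add_measure]
      gcongr
      exact le_self_add
  have hlow : ∀ C : ℝ≥0∞, (∀ f : X → ℝ≥0∞, Measurable f →
        (∫⁻ r, (∫⁻ x in {x | N x < r}, f x ∂μ₁) ^ q ∂μ₂) ^ (1 / q) ≤
          C * ∫⁻ x, f x ∂(μ₁.withDensity (fun x => (ψ x : ℝ≥0∞)) + σ)) → B₁ ≤ C := by
    intro C hC
    rw [hB₁]
    exact iSup_le fun r => hardy_lower μ₁ σ μ₂ hsf ψ hψ hσ N hN q hq C hC r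
  refine ⟨⟨?_, fun hB => ⟨B₁, hB, hup hB⟩⟩, fun hB => ⟨hup hB, fun C hC => hlow C hC⟩⟩
  rintro ⟨C, hCt, hC⟩
  exact ne_top_of_le_ne_top hCt (hlow C hC)
end

section
/- Let μ₁ and μ₂ be finite Borel measures on ℝ with compact support, both diffuse (i.e., μᵢ({x}) = 0 for every x ∈ ℝ). Let 1 < p ≤ q < ∞ with p' = p/(p−1). If B := sup_{r∈ℝ} μ₂([r,+∞))^{1/q} μ₁((−∞,r))^{1/p'} is finite, then for every Borel measurable function f : ℝ → [0,+∞], (∫_ℝ (∫_{(−∞,r)} f dμ₁)^q dμ₂(r))^{1/q} ≤ (p')^{1/p'} p^{1/q} B (∫_ℝ f^p dμ₁)^{1/p}. -/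
open MeasureTheory ENNReal
open scoped NNReal

lemma hardy_aux_map (μ : Measure ℝ) [IsFiniteMeasure μ] (hd : ∀ x : ℝ, μ {x} = 0) :
    μ.map (fun s => μ.real (Set.Iio s)) = volume.restrict (Set.Ioc 0 (μ.real Set.univ)) := by
  have hmono : Monotone (fun s => μ.real (Set.Iio s)) := by
    intro a b hab
    exact measureReal_mono (Set.Iio_subset_Iio hab)
  have hmeas := hmono.measurable
  have hna : NullSingletonClass μ := ⟨hd⟩
  have h1 : ∀ t : ℝ, 0 ≤ t → μ {s | μ.real (Set.Iio s) ≤ t} ≤ ENNReal.ofReal t := by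
    intro t ht
    have hm : MeasurableSet {s | μ.real (Set.Iio s) ≤ t} := hmeas measurableSet_Iic
    rw [hm.measure_eq_iSup_isCompact]
    refine iSup_le fun K => iSup_le fun hK => iSup_le fun hKc => ?_
    rcases K.eq_empty_or_nonempty with rfl | hne
    · simp
    have hmem := hKc.sSup_mem hne
    have h2 : μ.real (Set.Iio (sSup K)) ≤ t := hK hmem
    calc μ K ≤ μ (Set.Iic (sSup K)) :=
          measure_mono (fun x hx => le_csSup hKc.bddAbove hx)
      _ = μ (Set.Iio (sSup K)) := (measure_congr Iio_ae_eq_Iic).symm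
      _ = ENNReal.ofReal (μ.real (Set.Iio (sSup K))) := (ofReal_measureReal).symm
      _ ≤ _ := ENNReal.ofReal_le_ofReal h2
  have h2 : ∀ t : ℝ, t ≤ μ.real Set.univ → μ {s | μ.real (Set.Iio s) ≤ t}ᶜ
      ≤ ENNReal.ofReal (μ.real Set.univ - t) := by
    intro t ht
    have hm : MeasurableSet {s | μ.real (Set.Iio s) ≤ t} := hmeas measurableSet_Iic
    rw [hm.compl.measure_eq_iSup_isCompact]
    refine iSup_le fun K => iSup_le fun hK => iSup_le fun hKc => ?_
    rcases K.eq_empty_or_nonempty with rfl | hne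
    · simp
    have hmem := hKc.sInf_mem hne
    have h2 : t < μ.real (Set.Iio (sInf K)) := not_le.1 (hK hmem)
    have h3 : μ.real (Set.Iio (sInf K))ᶜ = μ.real Set.univ - μ.real (Set.Iio (sInf K)) :=
      measureReal_compl measurableSet_Iio
    calc μ K ≤ μ (Set.Iio (sInf K))ᶜ :=
          measure_mono (fun x hx => by simpa using csInf_le hKc.bddBelow hx)
      _ = ENNReal.ofReal (μ.real (Set.Iio (sInf K))ᶜ) := (ofReal_measureReal).symm
      _ ≤ _ := ENNReal.ofReal_le_ofReal (by linarith)
  have : IsFiniteMeasure (volume.restrict (Set.Ioc 0 (μ.real Set.univ))) :=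
    ⟨by simp⟩
  refine Measure.ext_of_Iic _ _ fun t => ?_
  rw [Measure.map_apply hmeas measurableSet_Iic, Measure.restrict_apply measurableSet_Iic]
  change μ {s | μ.real (Set.Iio s) ≤ t} = _
  have e : Set.Iic t ∩ Set.Ioc 0 (μ.real Set.univ) = Set.Ioc 0 (min t (μ.real Set.univ)) := by
    ext x; simp; tauto
  rw [e, Real.volume_Ioc, sub_zero]
  rcases lt_or_ge t 0 with h0 | h0
  · have : {s | μ.real (Set.Iio s) ≤ t} = ∅ := by
      ext s; simp; exact h0.trans_le measureReal_nonneg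
    rw [this, ENNReal.ofReal_of_nonpos (by exact (min_le_left _ _).trans h0.le)]; simp
  rcases le_total (μ.real Set.univ) t with hX | hX
  · have : {s | μ.real (Set.Iio s) ≤ t} = Set.univ := by
      ext s; simp; exact (measureReal_mono (Set.subset_univ _)).trans hX
    rw [this, min_eq_right hX, ofReal_measureReal]
  · rw [min_eq_left hX]
    refine le_antisymm (h1 t h0) ?_
    have hm : MeasurableSet {s | μ.real (Set.Iio s) ≤ t} := hmeas measurableSet_Iic
    have h3 := measure_add_measure_compl (μ := μ) hm
    have h4 := h2 t hX
    have h5 : ENNReal.ofReal t + ENNReal.ofReal (μ.real Set.univ - t) = μ Set.univ := by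
      rw [← ENNReal.ofReal_add h0 (by linarith)]; simp
    have h6 : ENNReal.ofReal t + ENNReal.ofReal (μ.real Set.univ - t)
        ≤ μ {s | μ.real (Set.Iio s) ≤ t} + ENNReal.ofReal (μ.real Set.univ - t) := by
      rw [h5, ← h3]; gcongr
    exact (ENNReal.add_le_add_iff_right ENNReal.ofReal_ne_top).1 h6

lemma hardy_aux_int (μ : Measure ℝ) [IsFiniteMeasure μ] (hd : ∀ x : ℝ, μ {x} = 0)
    (a : ℝ) (ha0 : 0 < a) (ha1 : a < 1) :
    ∫⁻ s, μ (Set.Iio s) ^ (-a) ∂μ = ENNReal.ofReal (1 / (1 - a)) * μ Set.univ ^ (1 - a) := by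
  have hmono : Monotone (fun s => μ.real (Set.Iio s)) := by
    intro a b hab
    exact measureReal_mono (Set.Iio_subset_Iio hab)
  have hmeas := hmono.measurable
  have hX : 0 ≤ μ.real Set.univ := measureReal_nonneg
  calc ∫⁻ s, μ (Set.Iio s) ^ (-a) ∂μ
      = ∫⁻ s, (fun t : ℝ => ENNReal.ofReal t ^ (-a)) (μ.real (Set.Iio s)) ∂μ := by simp
    _ = ∫⁻ t, ENNReal.ofReal t ^ (-a) ∂(μ.map (fun s => μ.real (Set.Iio s))) := by
        rw [lintegral_map (by fun_prop) hmeas]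
    _ = ∫⁻ t in Set.Ioc 0 (μ.real Set.univ), ENNReal.ofReal (t ^ (-a)) := by
        rw [hardy_aux_map μ hd]
        refine setLIntegral_congr_fun measurableSet_Ioc fun t ht => ?_
        exact ENNReal.ofReal_rpow_of_pos ht.1
    _ = ENNReal.ofReal (∫ t in Set.Ioc 0 (μ.real Set.univ), t ^ (-a)) := by
        rw [ofReal_integral_eq_lintegral_ofReal]
        · have := intervalIntegral.intervalIntegrable_rpow' (a := 0) (b := μ.real Set.univ)
            (r := -a) (by linarith)
          rwa [intervalIntegrable_iff_integrableOn_Ioc_of_le hX] at this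
        · refine (ae_restrict_iff' measurableSet_Ioc).2 (.of_forall fun t ht => ?_)
          exact Real.rpow_nonneg ht.1.le _
    _ = ENNReal.ofReal (1 / (1 - a) * μ.real Set.univ ^ (1 - a)) := by
        rw [← intervalIntegral.integral_of_le hX, integral_rpow (Or.inl (by linarith))]
        rw [Real.zero_rpow (by linarith)]
        congr 1
        rw [show -a + 1 = 1 - a by ring]; ring
    _ = _ := by
        rw [ENNReal.ofReal_mul (by apply one_div_nonneg.2; linarith),
          ← ENNReal.ofReal_rpow_of_nonneg hX (by linarith), ofReal_measureReal]

lemma hardy_aux_left (μ : Measure ℝ) [IsFiniteMeasure μ] (hd : ∀ x : ℝ, μ {x} = 0)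
    (a : ℝ) (ha0 : 0 < a) (ha1 : a < 1) (r : ℝ) :
    ∫⁻ s in Set.Iio r, μ (Set.Iio s) ^ (-a) ∂μ
      = ENNReal.ofReal (1 / (1 - a)) * μ (Set.Iio r) ^ (1 - a) := by
  have h := hardy_aux_int (μ.restrict (Set.Iio r))
    (fun x => le_antisymm ((Measure.restrict_apply_le _ _).trans (hd x).le) bot_le) a ha0 ha1
  rw [Measure.restrict_apply_univ] at h
  rw [← h]
  refine setLIntegral_congr_fun measurableSet_Iio fun s hs => ?_
  rw [Measure.restrict_apply measurableSet_Iio, Set.inter_eq_left.2]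
  exact Set.Iio_subset_Iio (le_of_lt hs)

lemma hardy_aux_right (μ : Measure ℝ) [IsFiniteMeasure μ] (hd : ∀ x : ℝ, μ {x} = 0)
    (a : ℝ) (ha0 : 0 < a) (ha1 : a < 1) (r : ℝ) :
    ∫⁻ s in Set.Ioi r, μ (Set.Ici s) ^ (-a) ∂μ
      = ENNReal.ofReal (1 / (1 - a)) * μ (Set.Ici r) ^ (1 - a) := by
  have hna : NullSingletonClass μ := ⟨hd⟩
  have hn : Measurable (fun x : ℝ => -x) := measurable_neg
  have h := hardy_aux_left (μ.map (fun x => -x))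
    (fun x => by rw [Measure.map_apply hn (measurableSet_singleton x)]; simpa using hd (-x))
    a ha0 ha1 (-r)
  have key : ∀ s, μ.map (fun x => -x) (Set.Iio (-s)) = μ (Set.Ici s) := by
    intro s
    rw [Measure.map_apply hn measurableSet_Iio]
    simp only [Set.neg_preimage, Set.neg_Iio, neg_neg]
    exact measure_congr Ioi_ae_eq_Ici
  rw [key] at h
  rw [← h]
  have hanti : Monotone (fun s => (μ.map (fun x => -x)) (Set.Iio s)) := fun a b hab =>
    measure_mono (Set.Iio_subset_Iio hab)
  rw [setLIntegral_map measurableSet_Iio (hanti.measurable.pow_const _) hn]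
  simp only [key, Set.neg_preimage, Set.neg_Iio, neg_neg]

lemma hardy_aux_mink (μ₁ μ₂ : Measure ℝ) [IsFiniteMeasure μ₁] [IsFiniteMeasure μ₂]
    (m : ℝ) (hm : 1 ≤ m) (g G w : ℝ → ℝ≥0∞) (hg : Measurable g) (hw : Measurable w) (A : ℝ≥0∞)
    (hfin : ∫⁻ r, (∫⁻ s in Set.Iio r, g s ∂μ₁) ^ m * w r ∂μ₂ ≠ ⊤)
    (hA : ∀ s, g s * (∫⁻ r in Set.Ioi s, w r ∂μ₂) ^ (1 / m) ≤ A * G s) (hG : Measurable G) :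
    (∫⁻ r, (∫⁻ s in Set.Iio r, g s ∂μ₁) ^ m * w r ∂μ₂) ^ (1 / m) ≤ A * ∫⁻ s, G s ∂μ₁ := by
  have hm0 : 0 < m := by linarith
  have hFm : Monotone (fun r => ∫⁻ s in Set.Iio r, g s ∂μ₁) := fun a b hab =>
    lintegral_mono_set (Set.Iio_subset_Iio hab)
  have hF := hFm.measurable
  have hFeq : ∀ r, ∫⁻ s in Set.Iio r, g s ∂μ₁ = ∫⁻ s, (Set.Iio r).indicator g s ∂μ₁ := fun r =>
    (lintegral_indicator measurableSet_Iio _).symm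
  generalize hFdef : (fun r => ∫⁻ s in Set.Iio r, g s ∂μ₁) = F at *
  have hFr : ∀ r, ∫⁻ s in Set.Iio r, g s ∂μ₁ = F r := fun r => by rw [← hFdef]
  simp only [hFr] at *
  set I := ∫⁻ r, F r ^ m * w r ∂μ₂ with hI
  have hle : 0 ≤ 1 - 1 / m := by
    rw [sub_nonneg, div_le_one hm0]; exact hm
  have h1 : I ≤ I ^ (1 - 1 / m) * (A * ∫⁻ s, G s ∂μ₁) := by
    calc I = ∫⁻ r, ∫⁻ s, F r ^ (m - 1) * w r * (Set.Iio r).indicator g s ∂μ₁ ∂μ₂ := by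
          refine lintegral_congr fun r => ?_
          rw [lintegral_const_mul _ (hg.indicator measurableSet_Iio), ← hFeq]
          have : F r ^ m = F r ^ (m - 1) * F r := by
            conv_lhs => rw [show m = (m - 1) + 1 by ring,
              ENNReal.rpow_add_of_nonneg _ _ (by linarith) zero_le_one, ENNReal.rpow_one]
          rw [this]; ring
      _ = ∫⁻ s, ∫⁻ r, F r ^ (m - 1) * w r * (Set.Iio r).indicator g s ∂μ₂ ∂μ₁ := by
          refine lintegral_lintegral_swap ?_
          refine Measurable.aemeasurable ?_
          have hs : MeasurableSet {z : ℝ × ℝ | z.2 < z.1} :=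
            measurableSet_lt measurable_snd measurable_fst
          have h := ((((hF.pow_const (m - 1)).mul hw).comp measurable_fst).mul
            ((hg.comp measurable_snd).indicator hs))
          convert h using 1
          ext z
          simp [Function.uncurry, Set.indicator]
      _ = ∫⁻ s, g s * ∫⁻ r in Set.Ioi s, F r ^ (m - 1) * w r ∂μ₂ ∂μ₁ := by
          refine lintegral_congr fun s => ?_
          have hmi : Measurable ((Set.Ioi s).indicator (fun r => F r ^ (m - 1) * w r)) :=
            ((hF.pow_const (m - 1)).mul hw).indicator measurableSet_Ioi
          rw [← lintegral_indicator measurableSet_Ioi, ← lintegral_const_mul _ hmi]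
          refine lintegral_congr fun r => ?_
          by_cases h : s < r
          · simp [Set.indicator, h]; ring
          · simp [Set.indicator, h]
      _ ≤ ∫⁻ s, I ^ (1 - 1 / m) * (A * G s) ∂μ₁ := by
          refine lintegral_mono fun s => ?_
          have e : ∀ r, F r ^ (m - 1) * w r = (F r ^ m * w r) ^ (1 - 1 / m) * w r ^ (1 / m) := by
            intro r
            rw [ENNReal.mul_rpow_of_nonneg _ _ hle, mul_assoc,
              ← ENNReal.rpow_add_of_nonneg _ _ hle (by positivity), ← ENNReal.rpow_mul,
              sub_add_cancel, ENNReal.rpow_one]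
            congr 2
            field_simp
          have h2 : ∫⁻ r in Set.Ioi s, F r ^ (m - 1) * w r ∂μ₂ ≤
              I ^ (1 - 1 / m) * (∫⁻ r in Set.Ioi s, w r ∂μ₂) ^ (1 / m) := by
            simp only [e]
            refine (ENNReal.lintegral_mul_norm_pow_le
              ((hF.pow_const m).mul hw).aemeasurable hw.aemeasurable hle
              (by positivity) (by ring)).trans ?_
            gcongr
            exact setLIntegral_le_lintegral _ _
          calc g s * ∫⁻ r in Set.Ioi s, F r ^ (m - 1) * w r ∂μ₂
              ≤ g s * (I ^ (1 - 1 / m) * (∫⁻ r in Set.Ioi s, w r ∂μ₂) ^ (1 / m)) := by gcongr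
            _ = I ^ (1 - 1 / m) * (g s * (∫⁻ r in Set.Ioi s, w r ∂μ₂) ^ (1 / m)) := by ring
            _ ≤ _ := mul_le_mul_right (hA s) _
      _ = _ := by
          rw [lintegral_const_mul _ (hG.const_mul A), lintegral_const_mul _ hG]
  rcases eq_or_ne I 0 with h0 | h0
  · rw [h0, ENNReal.zero_rpow_of_pos (by positivity)]; exact zero_le
  have hc0 : I ^ (1 - 1 / m) ≠ 0 := by
    simp [ENNReal.rpow_eq_zero_iff, h0, hfin]
  have hct : I ^ (1 - 1 / m) ≠ ⊤ := ENNReal.rpow_ne_top_of_nonneg hle hfin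
  have h3 : I = I ^ (1 - 1 / m) * I ^ (1 / m) := by
    rw [← ENNReal.rpow_add_of_nonneg _ _ hle (by positivity), sub_add_cancel, ENNReal.rpow_one]
  refine (ENNReal.mul_le_mul_iff_right hc0 hct).1 ?_
  rw [← h3]; exact h1

/-- One-variable Hardy inequality for diffuse, compactly supported finite Borel measures,
with constant `(p')^(1/p') p^(1/q)`. -/
theorem hardy_inequality_diffuse_compact
    (μ₁ μ₂ : Measure ℝ) [IsFiniteMeasure μ₁] [IsFiniteMeasure μ₂]
    (hd₁ : ∀ x : ℝ, μ₁ {x} = 0) (hd₂ : ∀ x : ℝ, μ₂ {x} = 0)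
    (K₁ K₂ : Set ℝ) (hK₁ : IsCompact K₁) (hK₂ : IsCompact K₂)
    (hμ₁K : μ₁ K₁ᶜ = 0) (hμ₂K : μ₂ K₂ᶜ = 0)
    (p q p' : ℝ) (hp : 1 < p) (hpq : p ≤ q) (hp' : p' = p / (p - 1))
    (B : ℝ≥0∞)
    (hB : B = ⨆ r : ℝ, μ₂ (Set.Ici r) ^ (1 / q) * μ₁ (Set.Iio r) ^ (1 / p'))
    (hBfin : B ≠ ⊤) :
    ∀ f : ℝ → ℝ≥0∞, Measurable f →
      (∫⁻ r, (∫⁻ s in Set.Iio r, f s ∂μ₁) ^ q ∂μ₂) ^ (1 / q) ≤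
        ENNReal.ofReal (p' ^ (1 / p') * p ^ (1 / q)) * B *
          (∫⁻ s, f s ^ p ∂μ₁) ^ (1 / p) := by
  intro f hf
  have hp0 : 0 < p := by linarith
  have hq0 : 0 < q := by linarith
  have hp'0 : 0 < p' := by rw [hp']; exact div_pos hp0 (by linarith)
  have hconj : 1 / p + 1 / p' = 1 := by
    have : p - 1 ≠ 0 := by linarith
    rw [hp']; field_simp; ring
  have hip : 1 / p < 1 := by rw [div_lt_one hp0]; exact hp
  have hip0 : 0 < 1 / p := by positivity
  have hip'0 : 0 < 1 / p' := by positivity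
  have hBr : ∀ r, μ₂ (Set.Ici r) ^ (1 / q) * μ₁ (Set.Iio r) ^ (1 / p') ≤ B := fun r => by
    rw [hB]; exact le_iSup (fun r => μ₂ (Set.Ici r) ^ (1 / q) * μ₁ (Set.Iio r) ^ (1 / p')) r
  have hMm : Monotone (fun s => μ₁ (Set.Iio s)) := fun a b hab =>
    measure_mono (Set.Iio_subset_Iio hab)
  have hNm : Antitone (fun s => μ₂ (Set.Ici s)) := fun a b hab =>
    measure_mono (Set.Ici_subset_Ici.2 hab)
  have hMtop : ∀ s, μ₁ (Set.Iio s) ≠ ⊤ := fun s => measure_ne_top _ _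
  have hNtop : ∀ s, μ₂ (Set.Ici s) ≠ ⊤ := fun s => measure_ne_top _ _
  have hMle : ∀ s, μ₁ (Set.Iio s) ≤ μ₁ Set.univ := fun s => measure_mono (Set.subset_univ _)
  have hleft := hardy_aux_left μ₁ hd₁ (1 / p) hip0 hip
  have hright := hardy_aux_right μ₂ hd₂ (1 / p') hip'0 (by linarith)
  rw [show 1 - 1 / p = 1 / p' by linarith, one_div_one_div] at hleft
  rw [show 1 - 1 / p' = 1 / p by linarith, one_div_one_div] at hright
  have hMpos : ∀ᵐ s ∂μ₁, μ₁ (Set.Iio s) ≠ 0 := by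
    have h := hardy_aux_int μ₁ hd₁ (1 / p) hip0 hip
    have h2 : ∀ᵐ s ∂μ₁, μ₁ (Set.Iio s) ^ (-(1 / p)) < ⊤ := by
      refine ae_lt_top (hMm.measurable.pow_const _) ?_
      rw [h]
      exact ENNReal.mul_ne_top ENNReal.ofReal_ne_top
        (ENNReal.rpow_ne_top_of_nonneg (by linarith) (measure_ne_top _ _))
    filter_upwards [h2] with s hs h0
    rw [h0, ENNReal.zero_rpow_of_neg (by linarith)] at hs
    exact lt_irrefl _ hs
  have hNpos : ∀ᵐ s ∂μ₂, μ₂ (Set.Ici s) ≠ 0 := by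
    obtain ⟨c, hc⟩ := hK₂.bddBelow
    have hr : μ₂.restrict (Set.Ioi (c - 1)) = μ₂ := by
      refine Measure.restrict_eq_self_of_ae_mem ?_
      have : ∀ᵐ x ∂μ₂, x ∈ K₂ := hμ₂K
      filter_upwards [this] with x hx
      have := hc hx
      simp only [Set.mem_Ioi]; linarith
    have h := hright (c - 1)
    rw [hr] at h
    have h2 : ∀ᵐ s ∂μ₂, μ₂ (Set.Ici s) ^ (-(1 / p')) < ⊤ := by
      refine ae_lt_top (hNm.measurable.pow_const _) ?_
      rw [h]
      exact ENNReal.mul_ne_top ENNReal.ofReal_ne_top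
        (ENNReal.rpow_ne_top_of_nonneg (by linarith) (measure_ne_top _ _))
    filter_upwards [h2] with s hs h0
    rw [h0, ENNReal.zero_rpow_of_neg (by linarith)] at hs
    exact lt_irrefl _ hs
  rcases eq_or_ne B 0 with hB0 | hB0
  · -- degenerate case
    have h : ∫⁻ r, (∫⁻ s in Set.Iio r, f s ∂μ₁) ^ q ∂μ₂ = 0 := by
      rw [← lintegral_zero (μ := μ₂)]
      refine lintegral_congr_ae ?_
      filter_upwards [hNpos] with r hr
      have h1 := hBr r
      rw [hB0, nonpos_iff_eq_zero, mul_eq_zero] at h1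
      have h2 : μ₁ (Set.Iio r) = 0 := by
        rcases h1 with h1 | h1
        · rw [ENNReal.rpow_eq_zero_iff_of_pos (by positivity)] at h1
          exact absurd h1 hr
        · rwa [ENNReal.rpow_eq_zero_iff_of_pos (by positivity)] at h1
      rw [Measure.restrict_eq_zero.2 h2]
      simp [hq0]
    rw [h, ENNReal.zero_rpow_of_pos (by positivity)]; exact zero_le
  have hC0 : ENNReal.ofReal (p' ^ (1 / p') * p ^ (1 / q)) ≠ 0 := by
    rw [Ne, ENNReal.ofReal_eq_zero, not_le]; positivity
  rcases eq_or_ne (∫⁻ s, f s ^ p ∂μ₁) ⊤ with hJ | hJ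
  · rw [hJ, ENNReal.top_rpow_of_pos (by positivity), ENNReal.mul_top (mul_ne_zero hC0 hB0)]
    exact le_top
  -- main case
  set P' := ENNReal.ofReal p' with hP'
  set P := ENNReal.ofReal p with hP
  have hgm : Measurable (fun s => f s ^ p * μ₁ (Set.Iio s) ^ (1 / p')) :=
    (hf.pow_const _).mul (hMm.measurable.pow_const _)
  have hwm : Measurable (fun r => (P' * μ₁ (Set.Iio r) ^ (1 / p')) ^ (q / p')) :=
    ((hMm.measurable.pow_const _).const_mul _).pow_const _
  have step1 : ∀ r, ∫⁻ s in Set.Iio r, f s ∂μ₁ ≤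
      (∫⁻ s in Set.Iio r, f s ^ p * μ₁ (Set.Iio s) ^ (1 / p') ∂μ₁) ^ (1 / p) *
        (P' * μ₁ (Set.Iio r) ^ (1 / p')) ^ (1 / p') := by
    intro r
    rw [← hleft r]
    refine le_trans (le_of_eq ?_) (ENNReal.lintegral_mul_norm_pow_le hgm.aemeasurable
      (hMm.measurable.pow_const _).aemeasurable hip0.le hip'0.le hconj)
    refine lintegral_congr_ae (ae_restrict_of_ae ?_)
    filter_upwards [hMpos] with s hs
    rw [ENNReal.mul_rpow_of_nonneg _ _ hip0.le, ← ENNReal.rpow_mul, ← ENNReal.rpow_mul,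
      ← ENNReal.rpow_mul, mul_assoc, ← ENNReal.rpow_add _ _ hs (hMtop s)]
    rw [show p * (1 / p) = 1 by field_simp, show 1 / p' * (1 / p) + -(1 / p) * (1 / p') = 0 by ring]
    simp
  have step2 : ∀ r, (∫⁻ s in Set.Iio r, f s ∂μ₁) ^ q ≤
      (∫⁻ s in Set.Iio r, f s ^ p * μ₁ (Set.Iio s) ^ (1 / p') ∂μ₁) ^ (q / p) *
        (P' * μ₁ (Set.Iio r) ^ (1 / p')) ^ (q / p') := by
    intro r
    refine (ENNReal.rpow_le_rpow (step1 r) hq0.le).trans (le_of_eq ?_)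
    rw [ENNReal.mul_rpow_of_nonneg _ _ hq0.le, ← ENNReal.rpow_mul, ← ENNReal.rpow_mul,
      one_div_mul_eq_div, one_div_mul_eq_div]
  have hfin : ∫⁻ r, (∫⁻ s in Set.Iio r, f s ^ p * μ₁ (Set.Iio s) ^ (1 / p') ∂μ₁) ^ (q / p) *
        (P' * μ₁ (Set.Iio r) ^ (1 / p')) ^ (q / p') ∂μ₂ ≠ ⊤ := by
    have hle : ∀ r, (∫⁻ s in Set.Iio r, f s ^ p * μ₁ (Set.Iio s) ^ (1 / p') ∂μ₁) ^ (q / p) *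
        (P' * μ₁ (Set.Iio r) ^ (1 / p')) ^ (q / p') ≤
        ((∫⁻ s, f s ^ p ∂μ₁) * μ₁ Set.univ ^ (1 / p')) ^ (q / p) *
        (P' * μ₁ Set.univ ^ (1 / p')) ^ (q / p') := by
      intro r
      gcongr
      · rw [← lintegral_mul_const _ (hf.pow_const _)]
        refine (setLIntegral_le_lintegral _ _).trans (lintegral_mono fun s => ?_)
        gcongr
        exact Set.subset_univ _
      · exact Set.subset_univ _
    refine ((lintegral_mono hle).trans_lt ?_).ne
    rw [lintegral_const]
    have hu : μ₁ Set.univ ^ (1 / p') ≠ ⊤ :=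
      ENNReal.rpow_ne_top_of_nonneg hip'0.le (measure_ne_top _ _)
    exact (ENNReal.mul_ne_top (ENNReal.mul_ne_top
      (ENNReal.rpow_ne_top_of_nonneg (by positivity) (ENNReal.mul_ne_top hJ hu))
      (ENNReal.rpow_ne_top_of_nonneg (by positivity)
        (ENNReal.mul_ne_top ENNReal.ofReal_ne_top hu))) (measure_ne_top _ _)).lt_top
  have hwle : ∀ r, (P' * μ₁ (Set.Iio r) ^ (1 / p')) ^ (q / p') ≤
      (P' * B) ^ (q / p') * μ₂ (Set.Ici r) ^ (-(1 / p')) := by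
    intro r
    have h1 : μ₁ (Set.Iio r) ^ (1 / p') ≤ B * μ₂ (Set.Ici r) ^ (-(1 / q)) := by
      rcases eq_or_ne (μ₂ (Set.Ici r)) 0 with h0 | h0
      · rw [h0, ENNReal.zero_rpow_of_neg (by simpa using hq0), ENNReal.mul_top hB0]; exact le_top
      · calc μ₁ (Set.Iio r) ^ (1 / p')
            = (μ₂ (Set.Ici r) ^ (1 / q) * μ₁ (Set.Iio r) ^ (1 / p')) *
                μ₂ (Set.Ici r) ^ (-(1 / q)) := by
              rw [mul_right_comm, ← ENNReal.rpow_add _ _ h0 (hNtop r)]; simp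
          _ ≤ _ := by gcongr; exact hBr r
    calc (P' * μ₁ (Set.Iio r) ^ (1 / p')) ^ (q / p')
        ≤ (P' * (B * μ₂ (Set.Ici r) ^ (-(1 / q)))) ^ (q / p') := by gcongr
      _ = _ := by
        rw [← mul_assoc, ENNReal.mul_rpow_of_nonneg _ _ (by positivity : 0 ≤ q / p'),
          ← ENNReal.rpow_mul]
        congr 2
        field_simp
  have hA : ∀ s, (f s ^ p * μ₁ (Set.Iio s) ^ (1 / p')) *
      (∫⁻ r in Set.Ioi s, (P' * μ₁ (Set.Iio r) ^ (1 / p')) ^ (q / p') ∂μ₂) ^ (1 / (q / p)) ≤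
      ((P' * B) ^ (p / p') * P ^ (p / q) * B) * f s ^ p := by
    intro s
    have h1 : ∫⁻ r in Set.Ioi s, (P' * μ₁ (Set.Iio r) ^ (1 / p')) ^ (q / p') ∂μ₂ ≤
        (P' * B) ^ (q / p') * (P * μ₂ (Set.Ici s) ^ (1 / p)) := by
      rw [← hright s, ← lintegral_const_mul _ (hNm.measurable.pow_const _)]
      exact lintegral_mono hwle
    have h2 : ((P' * B) ^ (q / p') * (P * μ₂ (Set.Ici s) ^ (1 / p))) ^ (1 / (q / p)) =
        (P' * B) ^ (p / p') * P ^ (p / q) * μ₂ (Set.Ici s) ^ (1 / q) := by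
      rw [one_div_div, ENNReal.mul_rpow_of_nonneg _ _ (by positivity : 0 ≤ p / q),
        ENNReal.mul_rpow_of_nonneg _ _ (by positivity : 0 ≤ p / q), ← ENNReal.rpow_mul,
        ← ENNReal.rpow_mul, mul_assoc, show q / p' * (p / q) = p / p' by field_simp,
        show 1 / p * (p / q) = 1 / q by field_simp]
    calc _ ≤ (f s ^ p * μ₁ (Set.Iio s) ^ (1 / p')) *
          ((P' * B) ^ (q / p') * (P * μ₂ (Set.Ici s) ^ (1 / p))) ^ (1 / (q / p)) := by gcongr
      _ = ((P' * B) ^ (p / p') * P ^ (p / q) *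
          (μ₂ (Set.Ici s) ^ (1 / q) * μ₁ (Set.Iio s) ^ (1 / p'))) * f s ^ p := by
          rw [h2]; ring
      _ ≤ _ := by gcongr; exact hBr s
  have hmink := hardy_aux_mink μ₁ μ₂ (q / p) (by rw [le_div_iff₀ hp0]; linarith)
    (fun s => f s ^ p * μ₁ (Set.Iio s) ^ (1 / p')) (fun s => f s ^ p)
    (fun r => (P' * μ₁ (Set.Iio r) ^ (1 / p')) ^ (q / p')) hgm hwm
    ((P' * B) ^ (p / p') * P ^ (p / q) * B) hfin hA (hf.pow_const _)
  have hconst : ((P' * B) ^ (p / p') * P ^ (p / q) * B) ^ (1 / p) =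
      ENNReal.ofReal (p' ^ (1 / p') * p ^ (1 / q)) * B := by
    rw [ENNReal.ofReal_mul (by positivity), ← ENNReal.ofReal_rpow_of_pos hp'0,
      ← ENNReal.ofReal_rpow_of_pos hp0, ENNReal.mul_rpow_of_nonneg _ _ hip0.le,
      ENNReal.mul_rpow_of_nonneg _ _ hip0.le, ← ENNReal.rpow_mul, ← ENNReal.rpow_mul,
      show p / p' * (1 / p) = 1 / p' by field_simp, show p / q * (1 / p) = 1 / q by field_simp,
      ENNReal.mul_rpow_of_nonneg _ _ hip'0.le]
    have hBB : B ^ (1 / p') * B ^ (1 / p) = B := by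
      rw [← ENNReal.rpow_add_of_nonneg _ _ hip'0.le hip0.le, add_comm, hconj, ENNReal.rpow_one]
    calc P' ^ (1 / p') * B ^ (1 / p') * P ^ (1 / q) * B ^ (1 / p)
        = P' ^ (1 / p') * P ^ (1 / q) * (B ^ (1 / p') * B ^ (1 / p)) := by ring
      _ = _ := by rw [hBB]
  calc (∫⁻ r, (∫⁻ s in Set.Iio r, f s ∂μ₁) ^ q ∂μ₂) ^ (1 / q)
      ≤ (∫⁻ r, (∫⁻ s in Set.Iio r, f s ^ p * μ₁ (Set.Iio s) ^ (1 / p') ∂μ₁) ^ (q / p) *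
        (P' * μ₁ (Set.Iio r) ^ (1 / p')) ^ (q / p') ∂μ₂) ^ (1 / q) :=
        ENNReal.rpow_le_rpow (lintegral_mono step2) (by positivity)
    _ = ((∫⁻ r, (∫⁻ s in Set.Iio r, f s ^ p * μ₁ (Set.Iio s) ^ (1 / p') ∂μ₁) ^ (q / p) *
        (P' * μ₁ (Set.Iio r) ^ (1 / p')) ^ (q / p') ∂μ₂) ^ (1 / (q / p))) ^ (1 / p) := by
        rw [← ENNReal.rpow_mul, show 1 / (q / p) * (1 / p) = 1 / q by field_simp]
    _ ≤ (((P' * B) ^ (p / p') * P ^ (p / q) * B) * ∫⁻ s, f s ^ p ∂μ₁) ^ (1 / p) :=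
        ENNReal.rpow_le_rpow hmink hip0.le
    _ = _ := by rw [ENNReal.mul_rpow_of_nonneg _ _ hip0.le, hconst]
end

section
/- Let μ₁ and μ₂ be finite Borel measures on ℝ with compact support, both diffuse (i.e., μᵢ({x}) = 0 for every x ∈ ℝ). Let 1 < p ≤ q < ∞ with p' = p/(p−1) and q' = q/(q−1). If B := sup_{r∈ℝ} μ₂([r,+∞))^{1/q} μ₁((−∞,r))^{1/p'} is finite, then for every Borel measurable function f : ℝ → [0,+∞], (∫_ℝ (∫_{(−∞,r)} f dμ₁)^q dμ₂(r))^{1/q} ≤ (q')^{1/p'} q^{1/q} B (∫_ℝ f^p dμ₁)^{1/p}. -/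
open MeasureTheory ENNReal
open scoped NNReal

lemma hi_meas_lt (μ : Measure ℝ) [IsFiniteMeasure μ] (g : ℝ → ℝ≥0∞) (hg : Measurable g)
    (H : ∀ k, μ (Set.Iic k) ≤ g k) (c : ℝ≥0∞) :
    μ {s | g s < c} ≤ c := by
  have hS : MeasurableSet {s | g s < c} := measurableSet_lt hg measurable_const
  by_contra! h
  obtain ⟨K, hKS, hK, hcK⟩ := hS.exists_lt_isCompact_of_ne_top (measure_ne_top _ _) h
  have hne : K.Nonempty := by
    by_contra hn
    rw [Set.not_nonempty_iff_eq_empty] at hn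
    simp [hn] at hcK
  obtain ⟨k, hk, hmax⟩ := hK.exists_isGreatest hne
  have h1 : μ K ≤ μ (Set.Iic k) := measure_mono fun x hx => hmax hx
  have h2 := H k
  have h3 : g k < c := hKS hk
  exact absurd hcK (not_lt.2 ((h1.trans h2).trans h3.le))

lemma hi_meas_lt' (μ : Measure ℝ) [IsFiniteMeasure μ] (g : ℝ → ℝ≥0∞) (hg : Measurable g)
    (H : ∀ k, μ (Set.Ici k) ≤ g k) (c : ℝ≥0∞) :
    μ {s | g s < c} ≤ c := by
  have hS : MeasurableSet {s | g s < c} := measurableSet_lt hg measurable_const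
  by_contra! h
  obtain ⟨K, hKS, hK, hcK⟩ := hS.exists_lt_isCompact_of_ne_top (measure_ne_top _ _) h
  have hne : K.Nonempty := by
    by_contra hn
    rw [Set.not_nonempty_iff_eq_empty] at hn
    simp [hn] at hcK
  obtain ⟨k, hk, hmax⟩ := hK.exists_isLeast hne
  have h1 : μ K ≤ μ (Set.Ici k) := measure_mono fun x hx => hmax hx
  have h3 : g k < c := hKS hk
  exact absurd hcK (not_lt.2 ((h1.trans (H k)).trans h3.le))

lemma hi_null {μ : Measure ℝ} {g : ℝ → ℝ≥0∞} (H : ∀ c, μ {s | g s < c} ≤ c) :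
    ∀ᵐ s ∂μ, g s ≠ 0 := by
  rw [ae_iff]
  simp only [not_not]
  refine le_antisymm (le_of_forall_gt fun c hc => ?_) bot_le
  obtain ⟨d, hd0, hdc⟩ := exists_between hc
  refine lt_of_le_of_lt ((measure_mono ?_).trans (H d)) hdc
  intro x (hx : g x = 0)
  show g x < d
  rw [hx]; exact hd0

lemma hi_minkowski (μ ν : Measure ℝ) [IsFiniteMeasure μ] [IsFiniteMeasure ν] (K : ℝ → ℝ → ℝ≥0∞)
    (hK : Measurable (Function.uncurry K)) (θ : ℝ) (hθ : 1 ≤ θ) :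
    (∫⁻ r, (∫⁻ s, K s r ∂μ) ^ θ ∂ν) ≤ (∫⁻ s, (∫⁻ r, K s r ^ θ ∂ν) ^ (1 / θ) ∂μ) ^ θ := by
  rcases hθ.eq_or_lt with rfl | hθ
  · simp only [rpow_one, div_one]
    rw [lintegral_lintegral_swap]
    exact (hK.comp measurable_swap).aemeasurable
  have hθ0 : 0 < θ := by linarith
  set R := ∫⁻ s, (∫⁻ r, K s r ^ θ ∂ν) ^ (1 / θ) ∂μ with hR
  set G : ℝ → ℝ≥0∞ := fun r => ∫⁻ s, K s r ∂μ with hG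
  have hGm : Measurable G := hK.lintegral_prod_left'
  have hconj : (Real.conjExponent θ).HolderConjugate θ := (Real.HolderConjugate.conjExponent hθ).symm
  have key : ∀ n : ℕ, ∫⁻ r, (min (G r) n) ^ θ ∂ν ≤ R ^ θ := by
    intro n
    set T := ∫⁻ r, (min (G r) n) ^ θ ∂ν with hT
    have hmn : Measurable fun r => min (G r) n := hGm.min measurable_const
    have hTfin : T ≠ ⊤ := by
      refine ne_top_of_le_ne_top ?_ (lintegral_mono (g := fun _ => (n : ℝ≥0∞) ^ θ) fun r => ?_)
      · rw [lintegral_const]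
        exact mul_ne_top (rpow_ne_top_of_nonneg hθ0.le (natCast_ne_top n)) (measure_ne_top _ _)
      · exact rpow_le_rpow (min_le_right _ _) hθ0.le
    have h1 : T ≤ T ^ (1 / Real.conjExponent θ) * R := by
      calc T ≤ ∫⁻ r, ∫⁻ s, (min (G r) n) ^ (θ - 1) * K s r ∂μ ∂ν := by
            refine lintegral_mono fun r => ?_
            have hKr : Measurable fun s => K s r := hK.comp (measurable_id.prodMk measurable_const)
            rw [lintegral_const_mul _ hKr]
            calc (min (G r) n) ^ θ = (min (G r) n) ^ ((θ - 1) + 1) := by ring_nf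
              _ = (min (G r) n) ^ (θ - 1) * (min (G r) n) := by
                  rw [rpow_add_of_nonneg _ _ (by linarith) (by norm_num), rpow_one]
              _ ≤ _ := by gcongr; exact min_le_left _ _
        _ = ∫⁻ s, ∫⁻ r, (min (G r) n) ^ (θ - 1) * K s r ∂ν ∂μ := by
            rw [lintegral_lintegral_swap]
            exact (((hmn.pow_const _).comp measurable_fst).mul
              (hK.comp measurable_swap)).aemeasurable
        _ ≤ ∫⁻ s, T ^ (1 / Real.conjExponent θ) * (∫⁻ r, K s r ^ θ ∂ν) ^ (1 / θ) ∂μ := by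
            refine lintegral_mono fun s => ?_
            refine (ENNReal.lintegral_mul_le_Lp_mul_Lq ν hconj (hmn.pow_const _).aemeasurable
              (hK.comp (measurable_const.prodMk measurable_id)).aemeasurable).trans ?_
            refine mul_le_mul' (rpow_le_rpow (lintegral_mono fun r => ?_)
              (by have := hconj.pos; positivity)) le_rfl
            show ((min (G r) n) ^ (θ - 1)) ^ _ ≤ _
            rw [← ENNReal.rpow_mul, Real.conjExponent, mul_div_cancel₀]
            linarith
        _ = _ := by
            rw [lintegral_const_mul _]
            exact ((hK.pow_const θ).lintegral_prod_right').pow_const _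
    rcases eq_or_ne T 0 with h0 | h0
    · rw [h0]; exact bot_le
    have h2 : T ^ (1 / θ) ≤ R := by
      have e : T = T ^ (1 / Real.conjExponent θ) * T ^ (1 / θ) := by
        rw [← rpow_add _ _ h0 hTfin]
        have := hconj.inv_add_inv_eq_one
        simp only [one_div, this, rpow_one]
      have h3 : T ^ (1 / Real.conjExponent θ) * T ^ (1 / θ) ≤ T ^ (1 / Real.conjExponent θ) * R := by
        rw [← e]; exact h1
      refine (ENNReal.mul_le_mul_iff_right ?_ ?_).1 h3
      · exact (rpow_pos (pos_iff_ne_zero.2 h0) hTfin).ne'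
      · exact rpow_ne_top_of_nonneg (by have := hconj.pos; positivity) hTfin
    calc T = (T ^ (1 / θ)) ^ θ := by rw [← rpow_mul]; field_simp; simp
      _ ≤ _ := rpow_le_rpow h2 hθ0.le
  have hsup : ∀ r, G r ^ θ = ⨆ n : ℕ, (min (G r) n) ^ θ := by
    intro r
    have hm : Monotone fun n : ℕ => (min (G r) (n:ℝ≥0∞)) ^ θ := fun a b hab =>
      rpow_le_rpow (min_le_min_left _ (by exact_mod_cast hab)) hθ0.le
    refine (iSup_eq_of_tendsto hm ?_).symm
    refine (ENNReal.continuous_rpow_const.tendsto _).comp ?_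
    have := (tendsto_const_nhds (x := G r)).min ENNReal.tendsto_nat_nhds_top
    simpa using this
  simp_rw [show ∀ r, ∫⁻ s, K s r ∂μ = G r from fun r => rfl, hsup]
  rw [lintegral_iSup (fun n => (hGm.min measurable_const).pow_const _)
    (fun a b hab r => rpow_le_rpow (min_le_min_left _ (by exact_mod_cast hab)) hθ0.le)]
  exact iSup_le key

lemma hi_power (μ : Measure ℝ) (g : ℝ → ℝ≥0∞) (hg : Measurable g) (hgt : ∀ s, g s ≠ ⊤)
    (H : ∀ c, μ {s | g s < c} ≤ c) (M : ℝ≥0∞) (hM : M ≠ ⊤) (hμM : μ Set.univ ≤ M)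
    (t : ℝ) (ht0 : 0 < t) (ht1 : t < 1) :
    ∫⁻ s, g s ^ (-t) ∂μ ≤ ENNReal.ofReal (1 / (1 - t)) * M ^ (1 - t) := by
  set m := M.toReal with hm
  have hm0 : 0 ≤ m := toReal_nonneg
  have hMm : M = ENNReal.ofReal m := (ofReal_toReal hM).symm
  have e1 : ∫⁻ s, g s ^ (-t) ∂μ = ∫⁻ s, ENNReal.ofReal ((g s).toReal ^ (-t)) ∂μ := by
    refine lintegral_congr_ae ?_
    filter_upwards [hi_null H] with s hs
    rw [← ENNReal.ofReal_rpow_of_pos (toReal_pos hs (hgt s)), ofReal_toReal (hgt s)]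
  have e2 : ∫⁻ x in Set.Ioo 0 m, ENNReal.ofReal (x ^ (-t)) = ENNReal.ofReal (1 / (1 - t)) * M ^ (1 - t) := by
    have hi : IntervalIntegrable (fun x : ℝ => x ^ (-t)) volume 0 m :=
      intervalIntegral.intervalIntegrable_rpow' (by linarith)
    rw [intervalIntegrable_iff_integrableOn_Ioo_of_le hm0] at hi
    rw [← ofReal_integral_eq_lintegral_ofReal hi]
    · rw [← integral_Ioc_eq_integral_Ioo, ← intervalIntegral.integral_of_le hm0,
        integral_rpow (Or.inl (by linarith)), hMm, ENNReal.ofReal_rpow_of_nonneg hm0 (by linarith),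
        ← ENNReal.ofReal_mul (by have : 0 < 1 - t := by linarith
                                 positivity)]
      congr 1
      rw [Real.zero_rpow (by linarith)]
      rw [show -t + 1 = 1 - t by ring]
      ring
    · filter_upwards [ae_restrict_mem measurableSet_Ioo] with x hx
      exact Real.rpow_nonneg hx.1.le _
  rw [e1, ← e2, lintegral_eq_lintegral_meas_lt, lintegral_eq_lintegral_meas_lt]
  · refine setLIntegral_mono' measurableSet_Ioi fun l (hl : 0 < l) => ?_
    set c : ℝ := l ^ (-(1 / t)) with hc
    have hc0 : 0 < c := Real.rpow_pos_of_pos hl _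
    have hA : μ {a | l < (g a).toReal ^ (-t)} ≤ ENNReal.ofReal (min m c) := by
      rw [ENNReal.ofReal_min]
      refine le_min ?_ ?_
      · rw [← hMm]; exact (measure_mono (Set.subset_univ _)).trans hμM
      · refine (measure_mono fun a (ha : l < (g a).toReal ^ (-t)) => ?_).trans (H _)
        show g a < ENNReal.ofReal c
        have hpos : 0 < (g a).toReal := by
          rcases (toReal_nonneg (a := g a)).eq_or_lt with h | h
          · rw [← h, Real.zero_rpow (by linarith)] at ha
            linarith
          · exact h
        rw [← ofReal_toReal (hgt a)]
        refine (ofReal_lt_ofReal_iff hc0).2 ?_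
        have := Real.rpow_lt_rpow_of_neg hl ha (z := -(1 / t)) (by have : 0 < 1 / t := by positivity
                                                                   linarith)
        rw [← Real.rpow_mul hpos.le] at this
        rwa [show -t * -(1 / t) = 1 by field_simp, Real.rpow_one] at this
    refine hA.trans ?_
    rw [Measure.restrict_apply' measurableSet_Ioo]
    calc ENNReal.ofReal (min m c) = volume (Set.Ioo 0 (min m c)) := by simp
      _ ≤ _ := by
        refine measure_mono fun x hx => ⟨?_, hx.1, hx.2.trans_le (min_le_left _ _)⟩
        show l < x ^ (-t)
        have := Real.rpow_lt_rpow_of_neg hx.1 (hx.2.trans_le (min_le_right _ _)) (z := -t) (by linarith)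
        rw [hc, ← Real.rpow_mul hl.le] at this
        rwa [show -(1 / t) * -t = 1 by field_simp, Real.rpow_one] at this
  · filter_upwards [ae_restrict_mem measurableSet_Ioo] with x hx
    exact Real.rpow_nonneg hx.1.le _
  · fun_prop
  · exact Filter.Eventually.of_forall fun x => Real.rpow_nonneg toReal_nonneg _
  · fun_prop

/-- One-variable Hardy inequality for diffuse, compactly supported finite Borel measures,
with the dual constant `(q')^(1/p') q^(1/q)`. -/
theorem hardy_inequality_diffuse_compact_dual_constant
    (μ₁ μ₂ : Measure ℝ) [IsFiniteMeasure μ₁] [IsFiniteMeasure μ₂]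
    (hd₁ : ∀ x : ℝ, μ₁ {x} = 0) (hd₂ : ∀ x : ℝ, μ₂ {x} = 0)
    (K₁ K₂ : Set ℝ) (hK₁ : IsCompact K₁) (hK₂ : IsCompact K₂)
    (hμ₁K : μ₁ K₁ᶜ = 0) (hμ₂K : μ₂ K₂ᶜ = 0)
    (p q p' q' : ℝ) (hp : 1 < p) (hpq : p ≤ q)
    (hp' : p' = p / (p - 1)) (hq' : q' = q / (q - 1))
    (B : ℝ≥0∞)
    (hB : B = ⨆ r : ℝ, μ₂ (Set.Ici r) ^ (1 / q) * μ₁ (Set.Iio r) ^ (1 / p'))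
    (hBfin : B ≠ ⊤) :
    ∀ f : ℝ → ℝ≥0∞, Measurable f →
      (∫⁻ r, (∫⁻ s in Set.Iio r, f s ∂μ₁) ^ q ∂μ₂) ^ (1 / q) ≤
        ENNReal.ofReal (q' ^ (1 / p') * q ^ (1 / q)) * B *
          (∫⁻ s, f s ^ p ∂μ₁) ^ (1 / p) := by
  intro f hf
  have hp0 : 0 < p := by linarith
  have hq0 : 0 < q := by linarith
  have hq1 : 0 < q - 1 := by linarith
  have hp1 : 0 < p - 1 := by linarith
  have hp'0 : 0 < p' := by rw [hp']; positivity
  have hq'0 : 0 < q' := by rw [hq']; positivity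
  have hconj : p.HolderConjugate p' := by rw [hp']; exact Real.HolderConjugate.conjExponent hp
  set V : ℝ → ℝ≥0∞ := fun s => μ₁ (Set.Iio s) with hV
  set W : ℝ → ℝ≥0∞ := fun s => μ₂ (Set.Ici s) with hW
  have hVm : Measurable V :=
    Monotone.measurable fun a b hab => measure_mono (Set.Iio_subset_Iio hab)
  have hWm : Measurable W :=
    Antitone.measurable fun a b hab => measure_mono (Set.Ici_subset_Ici.2 hab)
  have hVt : ∀ s, V s ≠ ⊤ := fun s => measure_ne_top _ _
  have hWt : ∀ s, W s ≠ ⊤ := fun s => measure_ne_top _ _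
  have hV1 : ∀ c, μ₁ {s | V s < c} ≤ c := by
    refine hi_meas_lt μ₁ V hVm fun k => ?_
    rw [← Set.Iio_union_right]
    refine (measure_union_le _ _).trans ?_
    rw [hd₁ k, add_zero]
  have hW1 : ∀ c, μ₂ {s | W s < c} ≤ c := hi_meas_lt' μ₂ W hWm fun k => le_rfl
  have hBr : ∀ r, W r ^ (1 / q) * V r ^ (1 / p') ≤ B := fun r => by
    rw [hB]; exact le_iSup (fun r => W r ^ (1 / q) * V r ^ (1 / p')) r
  have hb1 : 1 / q < 1 := by rw [div_lt_one hq0]; linarith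
  have hb0 : 0 < 1 / q := by positivity
  set θ := q / p with hθ
  have hθ1 : 1 ≤ θ := by rw [hθ, one_le_div hp0]; exact hpq
  have hθ0 : 0 < θ := by linarith
  -- power integrals
  have hPV : ∀ r, ∫⁻ s in Set.Iio r, V s ^ (-(1 / q)) ∂μ₁ ≤ ENNReal.ofReal q' * V r ^ (1 - 1 / q) := by
    intro r
    have := hi_power (μ₁.restrict (Set.Iio r)) V hVm hVt
      (fun c => (Measure.restrict_apply_le _ _).trans (hV1 c)) (V r) (hVt r) (by simp [hV]) (1 / q) hb0 hb1
    rwa [show 1 / (1 - 1 / q) = q' by rw [hq']; field_simp] at this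
  have hPW : ∀ s, ∫⁻ r in Set.Ioi s, W r ^ (-(1 - 1 / q)) ∂μ₂ ≤ ENNReal.ofReal q * W s ^ (1 / q) := by
    intro s
    have := hi_power (μ₂.restrict (Set.Ioi s)) W hWm hWt
      (fun c => (Measure.restrict_apply_le _ _).trans (hW1 c)) (W s) (hWt s)
      (by simp only [Measure.restrict_apply_univ]; exact measure_mono Set.Ioi_subset_Ici_self)
      (1 - 1 / q) (by linarith) (by linarith)
    rwa [show 1 / (1 - (1 - 1 / q)) = q by field_simp; ring, show 1 - (1 - 1 / q) = 1 / q by ring] at this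
  set F : ℝ → ℝ≥0∞ := fun s => f s ^ p * V s ^ (1 / q / p' * p) with hF
  have hFm : Measurable F := by fun_prop
  -- Hölder
  have hH : ∀ r, ∫⁻ s in Set.Iio r, f s ∂μ₁ ≤
      (∫⁻ s in Set.Iio r, F s ∂μ₁) ^ (1 / p) * (ENNReal.ofReal q' * V r ^ (1 - 1 / q)) ^ (1 / p') := by
    intro r
    have h1 : ∫⁻ s in Set.Iio r, f s ∂μ₁ = ∫⁻ s in Set.Iio r,
        ((fun s => f s * V s ^ (1 / q / p')) * fun s => V s ^ (-(1 / q / p'))) s ∂μ₁ := by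
      refine lintegral_congr_ae (ae_restrict_of_ae ?_)
      filter_upwards [hi_null hV1] with s hs
      simp only [Pi.mul_apply]
      rw [mul_assoc, ← rpow_add _ _ hs (hVt s), add_neg_cancel, rpow_zero, mul_one]
    rw [h1]
    refine (ENNReal.lintegral_mul_le_Lp_mul_Lq _ hconj (by fun_prop) (by fun_prop)).trans ?_
    refine mul_le_mul' (rpow_le_rpow (le_of_eq ?_) (by positivity))
      (rpow_le_rpow ((le_of_eq ?_).trans (hPV r)) (by positivity))
    · refine lintegral_congr fun s => ?_
      rw [mul_rpow_of_nonneg _ _ hp0.le, ← rpow_mul]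
    · refine lintegral_congr fun s => ?_
      rw [← rpow_mul]
      congr 1
      field_simp
  set C := ENNReal.ofReal q' with hC
  set Q := ENNReal.ofReal q with hQ
  -- kernel
  set K : ℝ → ℝ → ℝ≥0∞ := fun s r => if s < r then F s * W r ^ (-(1 - 1 / q) / θ) else 0 with hK
  have hKm : Measurable (Function.uncurry K) := by
    refine Measurable.ite (measurableSet_lt measurable_fst measurable_snd) ?_ measurable_const
    fun_prop
  have hpt : ∀ᵐ r ∂μ₂, (∫⁻ s in Set.Iio r, f s ∂μ₁) ^ q ≤
      C ^ (q / p') * B ^ (q - 1) * (∫⁻ s, K s r ∂μ₁) ^ θ := by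
    filter_upwards [hi_null hW1] with r hr
    have hKs : ∫⁻ s, K s r ∂μ₁ = (∫⁻ s in Set.Iio r, F s ∂μ₁) * W r ^ (-(1 - 1 / q) / θ) := by
      rw [← lintegral_mul_const _ hFm, ← lintegral_indicator measurableSet_Iio]
      refine lintegral_congr fun s => ?_
      simp only [hK, Set.indicator, Set.mem_Iio]
    have hVW : V r ^ ((1 - 1 / q) * (q / p')) ≤ B ^ (q - 1) * W r ^ (-(1 - 1 / q)) := by
      have h1 := rpow_le_rpow (hBr r) hq1.le
      rw [mul_rpow_of_nonneg _ _ hq1.le, ← rpow_mul, ← rpow_mul] at h1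
      calc V r ^ ((1 - 1 / q) * (q / p'))
          = (W r ^ (1 / q * (q - 1)) * V r ^ (1 / p' * (q - 1))) * W r ^ (-(1 - 1 / q)) := by
            rw [mul_right_comm, ← rpow_add _ _ hr (hWt r),
              show 1 / q * (q - 1) + -(1 - 1 / q) = 0 by field_simp; ring, rpow_zero, one_mul]
            congr 1
            field_simp
        _ ≤ _ := by gcongr
    calc (∫⁻ s in Set.Iio r, f s ∂μ₁) ^ q
        ≤ ((∫⁻ s in Set.Iio r, F s ∂μ₁) ^ (1 / p) * (C * V r ^ (1 - 1 / q)) ^ (1 / p')) ^ q :=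
          rpow_le_rpow (hH r) hq0.le
      _ = (∫⁻ s in Set.Iio r, F s ∂μ₁) ^ θ * (C ^ (q / p') * V r ^ ((1 - 1 / q) * (q / p'))) := by
          rw [mul_rpow_of_nonneg _ _ hq0.le, ← rpow_mul, ← rpow_mul,
            show 1 / p' * q = q / p' by ring, show 1 / p * q = θ by rw [hθ]; ring,
            mul_rpow_of_nonneg _ _ (by positivity : 0 ≤ q / p'), ← rpow_mul]
      _ ≤ (∫⁻ s in Set.Iio r, F s ∂μ₁) ^ θ * (C ^ (q / p') * (B ^ (q - 1) * W r ^ (-(1 - 1 / q)))) := by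
          gcongr
      _ = _ := by
          rw [hKs, mul_rpow_of_nonneg _ _ hθ0.le, ← rpow_mul, div_mul_cancel₀ _ hθ0.ne']
          ring
  have hKr : ∀ s, (∫⁻ r, K s r ^ θ ∂μ₂) ^ (1 / θ) ≤ Q ^ (1 / θ) * B ^ (p / q) * f s ^ p := by
    intro s
    have h1 : ∫⁻ r, K s r ^ θ ∂μ₂ = F s ^ θ * ∫⁻ r in Set.Ioi s, W r ^ (-(1 - 1 / q)) ∂μ₂ := by
      rw [← lintegral_const_mul _ (by fun_prop), ← lintegral_indicator measurableSet_Ioi]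
      refine lintegral_congr fun r => ?_
      simp only [hK, Set.indicator, Set.mem_Ioi]
      split_ifs
      · rw [mul_rpow_of_nonneg _ _ hθ0.le, ← rpow_mul, div_mul_cancel₀ _ hθ0.ne']
      · exact zero_rpow_of_pos hθ0
    have hpq0 : 0 ≤ p / q := by positivity
    have h2 := rpow_le_rpow (hBr s) hpq0
    rw [mul_rpow_of_nonneg _ _ hpq0, ← rpow_mul, ← rpow_mul] at h2
    have hi0 : 0 ≤ 1 / θ := by positivity
    calc (∫⁻ r, K s r ^ θ ∂μ₂) ^ (1 / θ) ≤ (F s ^ θ * (Q * W s ^ (1 / q))) ^ (1 / θ) := by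
          rw [h1]; exact rpow_le_rpow (mul_le_mul' le_rfl (hPW s)) hi0
      _ = F s * (Q ^ (1 / θ) * W s ^ (1 / q * (p / q))) := by
          rw [mul_rpow_of_nonneg _ _ hi0, mul_rpow_of_nonneg _ _ hi0, ← rpow_mul, ← rpow_mul,
            mul_one_div_cancel hθ0.ne', rpow_one, show 1 / θ = p / q by rw [hθ, one_div_div]]
      _ = Q ^ (1 / θ) * (W s ^ (1 / q * (p / q)) * V s ^ (1 / p' * (p / q))) * f s ^ p := by
          rw [hF, show 1 / p' * (p / q) = 1 / q / p' * p by ring]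
          ring
      _ ≤ _ := by gcongr
  have hmain : ∫⁻ r, (∫⁻ s in Set.Iio r, f s ∂μ₁) ^ q ∂μ₂ ≤
      C ^ (q / p') * B ^ (q - 1) * (Q ^ (1 / θ) * B ^ (p / q) * ∫⁻ s, f s ^ p ∂μ₁) ^ θ := by
    calc _ ≤ ∫⁻ r, C ^ (q / p') * B ^ (q - 1) * (∫⁻ s, K s r ∂μ₁) ^ θ ∂μ₂ := lintegral_mono_ae hpt
      _ = C ^ (q / p') * B ^ (q - 1) * ∫⁻ r, (∫⁻ s, K s r ∂μ₁) ^ θ ∂μ₂ := by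
          have hm : Measurable fun r => ∫⁻ s, K s r ∂μ₁ := hKm.lintegral_prod_left'
          rw [lintegral_const_mul _ (hm.pow_const _)]
      _ ≤ C ^ (q / p') * B ^ (q - 1) * (∫⁻ s, (∫⁻ r, K s r ^ θ ∂μ₂) ^ (1 / θ) ∂μ₁) ^ θ :=
          mul_le_mul' le_rfl (hi_minkowski μ₁ μ₂ K hKm θ hθ1)
      _ ≤ _ := by
          rw [← lintegral_const_mul _ (by fun_prop)]
          exact mul_le_mul' le_rfl (rpow_le_rpow (lintegral_mono hKr) hθ0.le)
  refine (rpow_le_rpow hmain hb0.le).trans (le_of_eq ?_)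
  rw [ENNReal.ofReal_mul (by positivity), ← ENNReal.ofReal_rpow_of_pos hq'0,
    ← ENNReal.ofReal_rpow_of_pos hq0]
  simp only [mul_rpow_of_nonneg _ _ hθ0.le, mul_rpow_of_nonneg _ _ hb0.le, ← rpow_mul]
  rw [show q / p' * (1 / q) = 1 / p' by field_simp,
    show 1 / θ * θ * (1 / q) = 1 / q by field_simp,
    show θ * (1 / q) = 1 / p by rw [hθ]; field_simp,
    show p / q * θ * (1 / q) = 1 / q by rw [hθ]; field_simp]
  have hBB : B ^ ((q - 1) * (1 / q)) * B ^ (1 / q) = B := by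
    rw [← rpow_add_of_nonneg _ _ (by positivity) hb0.le,
      show (q - 1) * (1 / q) + 1 / q = 1 by field_simp; ring, rpow_one]
  calc _ = C ^ (1 / p') * Q ^ (1 / q) * (B ^ ((q - 1) * (1 / q)) * B ^ (1 / q)) *
        (∫⁻ s, f s ^ p ∂μ₁) ^ (1 / p) := by ring
    _ = _ := by rw [hBB]
end
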